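/- arXiv:2210.01373 — 4 statements merged into one kernel-verified Lean document; each statement's English description precedes it below -/
import Mathlib

section
/- Let N = 3. With ρ, ψ and U_ε as in the context, there exist constants C > 0 and ε₀ > 0 such that for all ε ∈ (0, ε₀), | ∫_{ℝ³} U_ε(x)⁶ dx − K′₃ | ≤ C·ε³, where K′₃ = ∫_{ℝ³} u_1(x)⁶ dx. -/
open MeasureTheory

open Module (finrank)

/-! The density `u_ε ^ 2*` is a multiple of `(ε / (ε² + ‖x‖²)) ^ N`, which is the mass-preserving
rescaling of its value at `ε = 1`; hence `∫ u_ε ^ 2*` does not depend on `ε`. The cut-off only acts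
where `‖x‖ > ρ`, and there `ε / (ε² + ‖x‖²) ≤ ε / ‖x‖²` is at most a constant times
`ε / (1 + ‖x‖²)`, so cutting off costs at most `C ε ^ N` times the total mass. -/

section BubbleDensity

variable {E : Type*} [NormedAddCommGroup E] [NormedSpace ℝ E]

/-- The critical power of the Aubin–Talenti bubble of scale `ε` on an `N`-dimensional space, without
its normalising constant: `(ε / (ε² + ‖x‖²)) ^ N`. The dimension is read off `E`. -/
noncomputable def bubbleDensity (ε : ℝ) (x : E) : ℝ :=
  (ε / (ε ^ 2 + ‖x‖ ^ 2)) ^ finrank ℝ E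

lemma bubbleDensity_nonneg {ε : ℝ} (hε : 0 ≤ ε) (x : E) : 0 ≤ bubbleDensity ε x := by
  unfold bubbleDensity
  positivity

lemma bubbleDensity_eq_inv_pow_mul_comp_smul {ε : ℝ} (hε : 0 < ε) (x : E) :
    bubbleDensity ε x = ε⁻¹ ^ finrank ℝ E * bubbleDensity 1 (ε⁻¹ • x) := by
  have hbase : ε / (ε ^ 2 + ‖x‖ ^ 2) = ε⁻¹ * (1 / (1 ^ 2 + ‖ε⁻¹ • x‖ ^ 2)) := by
    rw [norm_smul, norm_inv, Real.norm_of_nonneg hε.le]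
    field_simp
  rw [bubbleDensity, hbase, mul_pow, bubbleDensity]

lemma bubbleDensity_le_of_le_norm {ε ρ : ℝ} (hε : 0 ≤ ε) (hρ : 0 < ρ) {x : E} (hx : ρ ≤ ‖x‖) :
    bubbleDensity ε x ≤
      ((1 + ρ ^ 2) / ρ ^ 2) ^ finrank ℝ E * ε ^ finrank ℝ E * bubbleDensity 1 x := by
  have hx0 : 0 < ‖x‖ := hρ.trans_le hx
  have hinv : 1 / ‖x‖ ^ 2 ≤ (1 + ρ ^ 2) / ρ ^ 2 * (1 / (1 ^ 2 + ‖x‖ ^ 2)) := by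
    rw [div_mul_div_comm, div_le_div_iff₀ (by positivity) (by positivity)]
    nlinarith [pow_le_pow_left₀ hρ.le hx 2]
  have hbase : ε / (ε ^ 2 + ‖x‖ ^ 2) ≤
      (1 + ρ ^ 2) / ρ ^ 2 * ε * (1 / (1 ^ 2 + ‖x‖ ^ 2)) :=
    calc ε / (ε ^ 2 + ‖x‖ ^ 2)
        ≤ ε / ‖x‖ ^ 2 := by gcongr; exact le_add_of_nonneg_left (sq_nonneg ε)
      _ = ε * (1 / ‖x‖ ^ 2) := by ring
      _ ≤ ε * ((1 + ρ ^ 2) / ρ ^ 2 * (1 / (1 ^ 2 + ‖x‖ ^ 2))) := by gcongr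
      _ = (1 + ρ ^ 2) / ρ ^ 2 * ε * (1 / (1 ^ 2 + ‖x‖ ^ 2)) := by ring
  simp only [bubbleDensity, ← mul_pow]
  exact pow_le_pow_left₀ (by positivity) hbase _

variable [FiniteDimensional ℝ E] [MeasurableSpace E] [BorelSpace E]
  (μ : Measure E) [μ.IsAddHaarMeasure]

lemma integrable_bubbleDensity [Nontrivial E] {ε : ℝ} (hε : 0 < ε) :
    Integrable (bubbleDensity ε) μ := by
  have hone : Integrable (bubbleDensity (E := E) 1) μ := by
    have hdim : (finrank ℝ E : ℝ) < 2 * finrank ℝ E := by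
      have : (0 : ℝ) < finrank ℝ E := mod_cast Module.finrank_pos
      linarith
    refine (integrable_rpow_neg_one_add_norm_sq hdim).congr (.of_forall fun x ↦ ?_)
    have hx : (0 : ℝ) ≤ 1 + ‖x‖ ^ 2 := by positivity
    simp only [bubbleDensity, neg_div, mul_div_cancel_left₀ _ (two_ne_zero (α := ℝ)),
      Real.rpow_neg hx, Real.rpow_natCast, one_pow, one_div, inv_pow]
  rw [funext (bubbleDensity_eq_inv_pow_mul_comp_smul hε)]
  exact (hone.comp_smul (inv_ne_zero hε.ne')).const_mul _

lemma integral_bubbleDensity {ε : ℝ} (hε : 0 < ε) :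
    ∫ x, bubbleDensity ε x ∂μ = ∫ x, bubbleDensity 1 x ∂μ := by
  simp_rw [bubbleDensity_eq_inv_pow_mul_comp_smul hε]
  rw [integral_const_mul, Measure.integral_comp_inv_smul_of_nonneg _ _ hε.le, smul_eq_mul,
    inv_pow, inv_mul_cancel_left₀ (by positivity)]

lemma abs_integral_mul_bubbleDensity_sub_le [Nontrivial E] {ρ M : ℝ} (hρ : 0 < ρ) {w : E → ℝ}
    (hw : AEStronglyMeasurable w μ) (hw_one : ∀ x, ‖x‖ ≤ ρ → w x = 1)
    (hw_bound : ∀ x, |w x - 1| ≤ M) {ε : ℝ} (hε : 0 < ε) :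
    |∫ x, w x * bubbleDensity ε x ∂μ - ∫ x, bubbleDensity 1 x ∂μ| ≤
      M * ((1 + ρ ^ 2) / ρ ^ 2) ^ finrank ℝ E * (∫ x, bubbleDensity 1 x ∂μ) *
        ε ^ finrank ℝ E := by
  set K : ℝ := ((1 + ρ ^ 2) / ρ ^ 2) ^ finrank ℝ E
  have hM : 0 ≤ M := (abs_nonneg _).trans (hw_bound 0)
  have hdiff : Integrable (fun x ↦ (w x - 1) * bubbleDensity ε x) μ :=
    (integrable_bubbleDensity μ hε).bdd_mul (hw.sub aestronglyMeasurable_const)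
      (.of_forall hw_bound)
  have hsplit : ∫ x, w x * bubbleDensity ε x ∂μ =
      ∫ x, (w x - 1) * bubbleDensity ε x ∂μ + ∫ x, bubbleDensity 1 x ∂μ := by
    rw [← integral_bubbleDensity μ hε, ← integral_add hdiff (integrable_bubbleDensity μ hε)]
    simp only [sub_one_mul, sub_add_cancel]
  have hcut (x : E) :
      ‖(w x - 1) * bubbleDensity ε x‖ ≤ M * K * ε ^ finrank ℝ E * bubbleDensity 1 x := by
    rw [norm_mul, Real.norm_of_nonneg (bubbleDensity_nonneg hε.le x)]
    rcases le_total ‖x‖ ρ with hx | hx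
    · have := bubbleDensity_nonneg zero_le_one x
      rw [hw_one x hx, sub_self, norm_zero, zero_mul]
      positivity
    · calc ‖w x - 1‖ * bubbleDensity ε x
          ≤ M * (K * ε ^ finrank ℝ E * bubbleDensity 1 x) :=
            mul_le_mul (hw_bound x) (bubbleDensity_le_of_le_norm hε.le hρ hx)
              (bubbleDensity_nonneg hε.le x) hM
        _ = M * K * ε ^ finrank ℝ E * bubbleDensity 1 x := by ring
  calc |∫ x, w x * bubbleDensity ε x ∂μ - ∫ x, bubbleDensity 1 x ∂μ|
      = ‖∫ x, (w x - 1) * bubbleDensity ε x ∂μ‖ := by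
        rw [hsplit, add_sub_cancel_right, Real.norm_eq_abs]
    _ ≤ ∫ x, M * K * ε ^ finrank ℝ E * bubbleDensity 1 x ∂μ :=
        norm_integral_le_of_norm_le ((integrable_bubbleDensity μ one_pos).const_mul _)
          (.of_forall hcut)
    _ = M * K * (∫ x, bubbleDensity 1 x ∂μ) * ε ^ finrank ℝ E := by
        rw [integral_const_mul]; ring

end BubbleDensity

lemma mul_mul_rpow_rpow_eq {w c t a p : ℝ} (hw : 0 ≤ w) (hc : 0 ≤ c) (ht : 0 ≤ t) {n : ℕ}
    (hap : a * p = n) : (w * (c * t ^ a)) ^ p = c ^ p * (w ^ p * t ^ n) := by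
  rw [Real.mul_rpow hw (by positivity), Real.mul_rpow hc (by positivity), ← Real.rpow_mul ht, hap,
    Real.rpow_natCast, mul_left_comm]

/-- In dimension `N ≥ 3` the Aubin–Talenti bubble is the case `a = (N - 2) / 2`,
`p = 2N / (N - 2)`, `c = (N (N - 2)) ^ ((N - 2) / 4)`. -/
theorem stmt_14_general {E : Type*} [NormedAddCommGroup E] [NormedSpace ℝ E]
    [FiniteDimensional ℝ E] [Nontrivial E] [MeasurableSpace E] [BorelSpace E]
    (μ : Measure E) [μ.IsAddHaarMeasure] {a p c ρ : ℝ} (hp : 0 ≤ p) (hap : a * p = finrank ℝ E)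
    (hc : 0 ≤ c) (hρ : 0 < ρ) {φ : E → ℝ} (hφ : AEMeasurable φ μ)
    (hφ_one : ∀ x, ‖x‖ ≤ ρ → φ x = 1) (hφ_mem : ∀ x, ρ ≤ ‖x‖ → φ x ∈ Set.Icc (0 : ℝ) 1)
    {u : ℝ → E → ℝ} (hu : ∀ ε, 0 < ε → ∀ x, u ε x = c * (ε / (ε ^ 2 + ‖x‖ ^ 2)) ^ a) :
    ∃ C : ℝ, 0 < C ∧ ∀ ε, 0 < ε →
      |∫ x, (φ x * u ε x) ^ p ∂μ - ∫ x, u 1 x ^ p ∂μ| ≤ C * ε ^ finrank ℝ E := by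
  have hφ_unit (x : E) : φ x ∈ Set.Icc (0 : ℝ) 1 :=
    (le_total ‖x‖ ρ).elim (fun hx ↦ by simp [hφ_one x hx]) (hφ_mem x)
  have hw_bound (x : E) : |φ x ^ p - 1| ≤ 1 := by
    obtain ⟨h0, h1⟩ := hφ_unit x
    rw [abs_le]
    constructor <;> linarith [Real.rpow_nonneg h0 p, Real.rpow_le_one h0 h1 hp]
  have hpow {ε : ℝ} (hε : 0 < ε) {w : ℝ} (hw : 0 ≤ w) (x : E) :
      (w * u ε x) ^ p = c ^ p * (w ^ p * bubbleDensity ε x) := by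
    rw [hu ε hε, mul_mul_rpow_rpow_eq hw hc (by positivity) hap, bubbleDensity]
  have hpow_one (x : E) : u 1 x ^ p = c ^ p * bubbleDensity 1 x := by
    simpa using hpow one_pos zero_le_one x
  set A : ℝ := c ^ p * (((1 + ρ ^ 2) / ρ ^ 2) ^ finrank ℝ E * ∫ x, bubbleDensity 1 x ∂μ)
  have hA : 0 ≤ A := by
    have hmass : 0 ≤ ∫ x : E, bubbleDensity 1 x ∂μ :=
      integral_nonneg fun x ↦ bubbleDensity_nonneg zero_le_one x
    positivity
  refine ⟨A + 1, by positivity, fun ε hε ↦ ?_⟩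
  calc |∫ x, (φ x * u ε x) ^ p ∂μ - ∫ x, u 1 x ^ p ∂μ|
      = c ^ p * |∫ x, φ x ^ p * bubbleDensity ε x ∂μ - ∫ x, bubbleDensity 1 x ∂μ| := by
        simp_rw [hpow hε (hφ_unit _).1, hpow_one, integral_const_mul]
        rw [← mul_sub, abs_mul, abs_of_nonneg (Real.rpow_nonneg hc p)]
    _ ≤ c ^ p * (((1 + ρ ^ 2) / ρ ^ 2) ^ finrank ℝ E * (∫ x, bubbleDensity 1 x ∂μ) *
          ε ^ finrank ℝ E) := by
        gcongr
        simpa only [one_mul] using abs_integral_mul_bubbleDensity_sub_le μ hρ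
          (hφ.pow_const p).aestronglyMeasurable
          (fun x hx ↦ by rw [hφ_one x hx, Real.one_rpow]) hw_bound hε
    _ = A * ε ^ finrank ℝ E := by ring
    _ ≤ (A + 1) * ε ^ finrank ℝ E := by gcongr; linarith

/-- Critical norm estimate for `N = 3` (Lemma 3.6, (3.13)): with `U_ε(x) = ψ(|x|) u_ε(x)`,
`∫ U_ε⁶ = S^{3/2} + O(ε³)`, where `K'₃ = ∫_{ℝ³} u_1⁶ = S^{3/2}`. -/
theorem stmt_14 (ρ : ℝ) (hρ : 0 < ρ) (hρ1 : 4 * ρ ^ 2 < 1)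
    (ψ : ℝ → ℝ) (hψs : ContDiff ℝ 1 ψ)
    (hψ1 : ∀ r : ℝ, 0 ≤ r → r ≤ ρ → ψ r = 1)
    (hψ01 : ∀ r : ℝ, ρ ≤ r → r ≤ 2 * ρ → ψ r ∈ Set.Icc (0 : ℝ) 1)
    (hψ0 : ∀ r : ℝ, 2 * ρ ≤ r → ψ r = 0)
    (u : ℝ → EuclideanSpace ℝ (Fin 3) → ℝ)
    (hu : ∀ ε : ℝ, 0 < ε → ∀ x : EuclideanSpace ℝ (Fin 3),
      u ε x = (3 : ℝ) ^ ((1 : ℝ) / 4) * (ε / (ε ^ 2 + ‖x‖ ^ 2)) ^ ((1 : ℝ) / 2)) :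
    ∃ C : ℝ, 0 < C ∧ ∃ ε₀ : ℝ, 0 < ε₀ ∧ ∀ ε ∈ Set.Ioo (0 : ℝ) ε₀,
      |(∫ x : EuclideanSpace ℝ (Fin 3), (ψ ‖x‖ * u ε x) ^ 6) -
        ∫ x : EuclideanSpace ℝ (Fin 3), (u 1 x) ^ 6| ≤ C * ε ^ 3 := by
  obtain ⟨C, hC, hbound⟩ := stmt_14_general volume (a := 1 / 2) (p := 6) (by norm_num)
    (by norm_num) (by positivity) hρ (hψs.continuous.comp continuous_norm).aemeasurable
    (fun x ↦ hψ1 ‖x‖ (norm_nonneg x))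
    (fun x hx ↦ (le_total ‖x‖ (2 * ρ)).elim (hψ01 ‖x‖ hx) fun h ↦ by simp [hψ0 ‖x‖ h]) hu
  exact ⟨C, hC, 1, one_pos, fun ε hε ↦ by simpa using hbound ε hε.1⟩
end

section
/- Let N = 3. With ρ, ψ and U_ε as in the context, there exist constants C > 0 and ε₀ > 0 such that for all ε ∈ (0, ε₀), | ∫_{ℝ³} U_ε(x)² dx − √3·ω₃·( ∫_0^{2ρ} ψ(r)² dr )·ε | ≤ C·ε², where ω₃ = 4π is the surface area of the unit sphere in ℝ³. -/
open MeasureTheory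

/-!
In polar coordinates, and up to the factor `4π ψ²`, the square of the bubble becomes the density
`√3 ε r² / (ε² + r²)`, which is `√3 ε` minus `√3 ε · ε² / (ε² + r²)`. The first part gives the
leading term; the second is `√3 ε` times a kernel of total mass `ε π / 2` on the half-line, hence
contributes `O(ε²)` as soon as `ψ²` is bounded.
-/

open Set Real

section HalfLine

variable {F : Type*} [NormedAddCommGroup F]

theorem integral_fun_norm_euclideanSpace_fin_three [NormedSpace ℝ F] (f : ℝ → F) :
    ∫ x : EuclideanSpace ℝ (Fin 3), f ‖x‖ = (4 * π) • ∫ r in Ioi (0 : ℝ), r ^ 2 • f r := by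
  have hvol : (volume : Measure (EuclideanSpace ℝ (Fin 3))).real (Metric.ball 0 1) = π * 4 / 3 := by
    rw [Measure.real, EuclideanSpace.volume_ball_fin_three, ENNReal.ofReal_one, one_pow, one_mul,
      ENNReal.toReal_ofReal (by positivity)]
  rw [integral_fun_norm_addHaar volume f, hvol, finrank_euclideanSpace_fin,
    ← Nat.cast_smul_eq_nsmul ℝ, smul_smul]
  congr 1
  push_cast
  ring

theorem integrableOn_Ioi_of_eq_zero {f : ℝ → F} {a b : ℝ} {μ : Measure ℝ}
    (hf : IntegrableOn f (Ioc a b) μ) (hf0 : ∀ r, b < r → f r = 0) : IntegrableOn f (Ioi a) μ :=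
  hf.of_forall_sdiff_eq_zero measurableSet_Ioi fun r hr ↦
    hf0 r (not_le.1 fun hrb ↦ hr.2 ⟨hr.1, hrb⟩)

theorem setIntegral_Ioi_eq_intervalIntegral_of_eq_zero [NormedSpace ℝ F] {f : ℝ → F} {a b : ℝ}
    {μ : Measure ℝ} (hab : a ≤ b) (hf0 : ∀ r, b < r → f r = 0) :
    ∫ r in Ioi a, f r ∂μ = ∫ r in a..b, f r ∂μ := by
  rw [intervalIntegral.integral_of_le hab]
  exact setIntegral_eq_of_subset_of_forall_sdiff_eq_zero measurableSet_Ioi Ioc_subset_Ioi_self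
    fun r hr ↦ hf0 r (not_le.1 fun hrb ↦ hr.2 ⟨hr.1, hrb⟩)

end HalfLine

section Kernel

variable {ε : ℝ}

theorem sq_div_sq_add_sq_eq_inv_one_add_sq (hε : ε ≠ 0) (r : ℝ) :
    ε ^ 2 / (ε ^ 2 + r ^ 2) = (1 + (ε⁻¹ * r) ^ 2)⁻¹ := by
  have : 1 + (ε⁻¹ * r) ^ 2 ≠ 0 := by positivity
  have : ε ^ 2 + r ^ 2 ≠ 0 := by positivity
  field_simp

theorem integrable_sq_div_sq_add_sq (hε : ε ≠ 0) :
    Integrable fun r : ℝ ↦ ε ^ 2 / (ε ^ 2 + r ^ 2) := by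
  simp only [sq_div_sq_add_sq_eq_inv_one_add_sq hε]
  exact integrable_inv_one_add_sq.comp_mul_left' (inv_ne_zero hε)

theorem integral_Ioi_sq_div_sq_add_sq (hε : 0 < ε) :
    ∫ r in Ioi (0 : ℝ), ε ^ 2 / (ε ^ 2 + r ^ 2) = ε * (π / 2) := by
  simp only [sq_div_sq_add_sq_eq_inv_one_add_sq hε.ne']
  rw [integral_comp_mul_left_Ioi (fun r ↦ (1 + r ^ 2)⁻¹) 0 (inv_pos.2 hε), mul_zero,
    integral_Ioi_inv_one_add_sq, arctan_zero, sub_zero, inv_inv, smul_eq_mul]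

theorem abs_integral_Ioi_mul_sq_div_sq_add_sq_le {f : ℝ → ℝ} {M : ℝ} (hε : 0 < ε)
    (hfM : ∀ r, 0 < r → |f r| ≤ M) :
    |∫ r in Ioi (0 : ℝ), f r * (ε ^ 2 / (ε ^ 2 + r ^ 2))| ≤ M * (ε * (π / 2)) := by
  rw [← integral_Ioi_sq_div_sq_add_sq hε, ← integral_const_mul, ← norm_eq_abs]
  refine norm_integral_le_of_norm_le
    ((integrable_sq_div_sq_add_sq hε.ne').integrableOn.const_mul M) ?_
  filter_upwards [ae_restrict_mem measurableSet_Ioi] with r hr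
  rw [norm_mul, norm_of_nonneg (by positivity : 0 ≤ ε ^ 2 / (ε ^ 2 + r ^ 2))]
  gcongr
  exact hfM r hr

theorem integral_Ioi_sq_mul_mul_div_sq_add_sq {f : ℝ → ℝ} (hε : ε ≠ 0)
    (hf : IntegrableOn f (Ioi 0)) :
    ∫ r in Ioi (0 : ℝ), r ^ 2 * (f r * (ε / (ε ^ 2 + r ^ 2))) =
      ε * ((∫ r in Ioi (0 : ℝ), f r) - ∫ r in Ioi (0 : ℝ), f r * (ε ^ 2 / (ε ^ 2 + r ^ 2))) := by
  have hκ : Integrable (fun r ↦ f r * (ε ^ 2 / (ε ^ 2 + r ^ 2))) (volume.restrict (Ioi 0)) := by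
    refine hf.mul_bdd (c := 1)
      (integrable_sq_div_sq_add_sq hε).aestronglyMeasurable.restrict (.of_forall fun r ↦ ?_)
    rw [norm_of_nonneg (by positivity)]
    exact div_le_one_of_le₀ (by linarith [sq_nonneg r]) (by positivity)
  rw [← integral_sub hf hκ, ← integral_const_mul]
  congr with r
  have : ε ^ 2 + r ^ 2 ≠ 0 := by positivity
  field_simp
  ring

end Kernel

theorem abs_integral_mul_div_sq_add_norm_sq_sub_le {f : ℝ → ℝ} {M ε : ℝ} (hε : 0 < ε)
    (hf : IntegrableOn f (Ioi 0)) (hfM : ∀ r, 0 < r → |f r| ≤ M) :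
    |(∫ x : EuclideanSpace ℝ (Fin 3), f ‖x‖ * (ε / (ε ^ 2 + ‖x‖ ^ 2))) -
      4 * π * (∫ r in Ioi (0 : ℝ), f r) * ε| ≤ 2 * π ^ 2 * M * ε ^ 2 := by
  set J := ∫ r in Ioi (0 : ℝ), f r * (ε ^ 2 / (ε ^ 2 + r ^ 2)) with hJ
  have hsplit : (∫ x : EuclideanSpace ℝ (Fin 3), f ‖x‖ * (ε / (ε ^ 2 + ‖x‖ ^ 2))) -
      4 * π * (∫ r in Ioi (0 : ℝ), f r) * ε = -(4 * π * ε * J) := by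
    rw [integral_fun_norm_euclideanSpace_fin_three fun r ↦ f r * (ε / (ε ^ 2 + r ^ 2))]
    simp only [smul_eq_mul]
    rw [integral_Ioi_sq_mul_mul_div_sq_add_sq hε.ne' hf, ← hJ]
    ring
  calc _ = 4 * π * ε * |J| := by
        rw [hsplit, abs_neg, abs_mul, abs_of_pos (by positivity : 0 < 4 * π * ε)]
    _ ≤ 4 * π * ε * (M * (ε * (π / 2))) := by
        gcongr
        exact abs_integral_Ioi_mul_sq_div_sq_add_sq_le hε hfM
    _ = 2 * π ^ 2 * M * ε ^ 2 := by ring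

theorem rpow_quarter_mul_rpow_half_sq {a t : ℝ} (ha : 0 ≤ a) (ht : 0 ≤ t) :
    (a ^ (1 / 4 : ℝ) * t ^ (1 / 2 : ℝ)) ^ 2 = √a * t := by
  rw [mul_pow, ← sqrt_eq_rpow t, sq_sqrt ht, sqrt_eq_rpow, ← rpow_mul_natCast ha]
  norm_num

theorem cutoff_sq_le_one {ψ : ℝ → ℝ} {a b r : ℝ} (hψ1 : ∀ r, 0 ≤ r → r ≤ a → ψ r = 1)
    (hψ01 : ∀ r, a ≤ r → r ≤ b → ψ r ∈ Icc 0 1) (hψ0 : ∀ r, b ≤ r → ψ r = 0) (hr : 0 ≤ r) :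
    ψ r ^ 2 ≤ 1 := by
  rcases le_total r a with hra | har
  · rw [hψ1 r hr hra, one_pow]
  rcases le_total r b with hrb | hbr
  · exact pow_le_one₀ (hψ01 r har hrb).1 (hψ01 r har hrb).2
  · rw [hψ0 r hbr, zero_pow two_ne_zero]
    exact zero_le_one

theorem stmt_15_general {ψ : ℝ → ℝ} {M ε : ℝ} (hψ : IntegrableOn (fun r ↦ ψ r ^ 2) (Ioi 0))
    (hψM : ∀ r, 0 < r → ψ r ^ 2 ≤ M) (hε : 0 < ε) {u : EuclideanSpace ℝ (Fin 3) → ℝ}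
    (hu : ∀ x, u x = (3 : ℝ) ^ ((1 : ℝ) / 4) * (ε / (ε ^ 2 + ‖x‖ ^ 2)) ^ ((1 : ℝ) / 2)) :
    |(∫ x, (ψ ‖x‖ * u x) ^ 2) - √3 * (4 * π) * (∫ r in Ioi (0 : ℝ), ψ r ^ 2) * ε| ≤
      √3 * (2 * π ^ 2) * M * ε ^ 2 := by
  have hsq (x) : (ψ ‖x‖ * u x) ^ 2 = √3 * (ψ ‖x‖ ^ 2 * (ε / (ε ^ 2 + ‖x‖ ^ 2))) := by
    rw [hu, mul_pow, rpow_quarter_mul_rpow_half_sq (by norm_num) (by positivity)]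
    ring
  have hbound := abs_integral_mul_div_sq_add_norm_sq_sub_le hε hψ (M := M) fun r hr ↦ by
    simpa only [abs_sq] using hψM r hr
  simp only [hsq, integral_const_mul, mul_assoc √3, ← mul_sub, abs_mul,
    abs_of_nonneg (sqrt_nonneg 3)]
  gcongr

/-- `L²` estimate for `N = 3` (Lemma 3.6, (3.14)): with `U_ε(x) = ψ(|x|) u_ε(x)`,
`∫ U_ε² = √3 ω₃ (∫_0^{2ρ} ψ(r)² dr) ε + O(ε²)`, where `ω₃ = 4π`. -/
theorem stmt_15 (ρ : ℝ) (hρ : 0 < ρ) (hρ1 : 4 * ρ ^ 2 < 1)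
    (ψ : ℝ → ℝ) (hψs : ContDiff ℝ 1 ψ)
    (hψ1 : ∀ r : ℝ, 0 ≤ r → r ≤ ρ → ψ r = 1)
    (hψ01 : ∀ r : ℝ, ρ ≤ r → r ≤ 2 * ρ → ψ r ∈ Set.Icc (0 : ℝ) 1)
    (hψ0 : ∀ r : ℝ, 2 * ρ ≤ r → ψ r = 0)
    (u : ℝ → EuclideanSpace ℝ (Fin 3) → ℝ)
    (hu : ∀ ε : ℝ, 0 < ε → ∀ x : EuclideanSpace ℝ (Fin 3),
      u ε x = (3 : ℝ) ^ ((1 : ℝ) / 4) * (ε / (ε ^ 2 + ‖x‖ ^ 2)) ^ ((1 : ℝ) / 2)) :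
    ∃ C : ℝ, 0 < C ∧ ∃ ε₀ : ℝ, 0 < ε₀ ∧ ∀ ε ∈ Set.Ioo (0 : ℝ) ε₀,
      |(∫ x : EuclideanSpace ℝ (Fin 3), (ψ ‖x‖ * u ε x) ^ 2) -
        Real.sqrt 3 * (4 * Real.pi) * (∫ r in (0:ℝ)..(2 * ρ), (ψ r) ^ 2) * ε| ≤
          C * ε ^ 2 := by
  have hψsq0 (r) (hr : 2 * ρ < r) : ψ r ^ 2 = 0 := by rw [hψ0 r hr.le, zero_pow two_ne_zero]
  have hψint : IntegrableOn (fun r ↦ ψ r ^ 2) (Ioi 0) :=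
    integrableOn_Ioi_of_eq_zero (hψs.continuous.pow 2).integrableOn_Ioc hψsq0
  refine ⟨√3 * (2 * π ^ 2) * 1, by positivity, 1, one_pos, fun ε hε ↦ ?_⟩
  rw [← setIntegral_Ioi_eq_intervalIntegral_of_eq_zero (by positivity) hψsq0]
  exact stmt_15_general hψint (fun r hr ↦ cutoff_sq_le_one hψ1 hψ01 hψ0 hr.le) hε.1 (hu ε hε.1)
end

section
/- Let N = 3. With ρ, ψ and U_ε as in the context, there exist constants C > 0 and ε₀ ∈ (0,1) such that for all ε ∈ (0, ε₀), | ∫_{ℝ³} U_ε(x)²·log(U_ε(x)²) dx − √3·ω₃·( ∫_0^{2ρ} ψ(r)² dr )·ε·log ε | ≤ C·ε, where ω₃ = 4π is the surface area of the unit sphere in ℝ³, with the convention 0·log 0 = 0. -/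
open MeasureTheory

/-!
In polar coordinates `U_ε(x)² = g(|x|)` with `g r = w r * (√3 ε / (ε² + r²))` and `w = ψ²`, so the
integral is `4π ∫ r² g log g dr`. Put `p = ε² / (ε² + r²)` and `q = r² / (ε² + r²)`, so that
`p + q = 1`. The product rule for `t log t` gives
`r² g log g = √3 ε (log ε · w + q w log w + q w log √3 - q w log (ε² + r²) - p w log ε)`.
The first term is the main one. The others are `O(|w log w| + w (1 + |log r|))`, uniformly in
`ε ≤ 1`: for the last one, `p log (r / ε) ≤ p r / ε ≤ 1` lets `|log ε|` be traded for `|log r|`.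
-/

section General

open Real Set Module

theorem mul_mul_log_mul (x y : ℝ) :
    x * y * log (x * y) = y * (x * log x) + x * (y * log y) := by
  have := negMulLog_mul x y
  simp only [negMulLog] at this
  linarith

theorem abs_log_sq_add_sq_le {ε r : ℝ} (hε : |ε| ≤ 1) (hr : r ≠ 0) :
    |log (ε ^ 2 + r ^ 2)| ≤ 1 + 2 * |log r| := by
  have lower : 2 * log r ≤ log (ε ^ 2 + r ^ 2) := by
    rw [← Nat.cast_two, ← log_pow]
    exact log_le_log (by positivity) (by nlinarith)
  have upper : log (ε ^ 2 + r ^ 2) ≤ 1 + 2 * |log r| :=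
    calc log (ε ^ 2 + r ^ 2) ≤ log⁺ (ε ^ 2 + r ^ 2) := le_max_right _ _
      _ ≤ log 2 + log⁺ (ε ^ 2) + log⁺ (r ^ 2) := posLog_add
      _ = log 2 + 2 * log⁺ r := by simp [(posLog_eq_zero_iff ε).2 hε]
      _ ≤ 1 + 2 * |log r| := by
        gcongr
        · exact log_two_lt_d9.le.trans (by norm_num)
        · exact max_le (abs_nonneg _) (le_abs_self _)
  exact abs_le.2 ⟨by linarith [neg_abs_le (log r)], upper⟩

theorem abs_sq_div_sq_add_sq_mul_log_le {ε r : ℝ} (hε : 0 < ε) (hε1 : ε ≤ 1) (hr : 0 < r) :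
    |ε ^ 2 / (ε ^ 2 + r ^ 2) * log ε| ≤ 1 + |log r| := by
  set p := ε ^ 2 / (ε ^ 2 + r ^ 2) with hp
  have hp0 : 0 ≤ p := by positivity
  have hp1 : p ≤ 1 := div_le_one_of_le₀ (by nlinarith) (by positivity)
  have hpr : p * (r / ε) ≤ 1 := by
    rw [hp, show ε ^ 2 / (ε ^ 2 + r ^ 2) * (r / ε) = ε * r / (ε ^ 2 + r ^ 2) by field_simp]
    exact div_le_one_of_le₀ (by nlinarith [two_mul_le_add_sq ε r, mul_pos hε hr]) (by positivity)
  rw [abs_of_nonpos (mul_nonpos_of_nonneg_of_nonpos hp0 (log_nonpos hε.le hε1))]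
  calc -(p * log ε) = p * log (r / ε) + p * -log r := by rw [log_div hr.ne' hε.ne']; ring
    _ ≤ p * (r / ε) + p * |log r| := by
      gcongr
      · exact log_le_self (by positivity)
      · exact neg_le_abs (log r)
    _ ≤ 1 + |log r| := add_le_add hpr (mul_le_of_le_one_left (abs_nonneg _) hp1)

theorem sq_rpow_quarter_mul_rpow_half {a b : ℝ} (ha : 0 ≤ a) (hb : 0 ≤ b) :
    (a ^ ((1 : ℝ) / 4) * b ^ ((1 : ℝ) / 2)) ^ 2 = √a * b := by
  rw [mul_pow, ← rpow_mul_natCast ha, ← rpow_mul_natCast hb, sqrt_eq_rpow]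
  norm_num

/-- The square, as a function of the radius, of the three-dimensional Aubin–Talenti bubble of
concentration `ε`; the normalisation constant `c` is `√3` in the classical case. -/
noncomputable def bubbleSq (c ε r : ℝ) : ℝ := c * (ε / (ε ^ 2 + r ^ 2))

theorem measurable_bubbleSq (c ε : ℝ) : Measurable (bubbleSq c ε) := by
  unfold bubbleSq
  fun_prop

theorem sq_mul_mul_bubbleSq_mul_log_sub_eq {c ε r : ℝ} (w : ℝ) (hc : 0 < c) (hε : 0 < ε) :
    r ^ 2 * (w * bubbleSq c ε r * log (w * bubbleSq c ε r)) - c * ε * log ε * w =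
      c * ε * (r ^ 2 / (ε ^ 2 + r ^ 2) * (w * log w + w * log c - w * log (ε ^ 2 + r ^ 2)) -
        w * (ε ^ 2 / (ε ^ 2 + r ^ 2) * log ε)) := by
  have hs : 0 < ε ^ 2 + r ^ 2 := by positivity
  have hlog : log (bubbleSq c ε r) = log c + log ε - log (ε ^ 2 + r ^ 2) := by
    rw [bubbleSq, log_mul hc.ne' (by positivity), log_div hε.ne' hs.ne']
    ring
  rw [mul_mul_log_mul, hlog, bubbleSq]
  field_simp
  ring

theorem abs_sq_mul_mul_bubbleSq_mul_log_sub_le {c ε r w : ℝ} (hc : 0 < c) (hε : 0 < ε)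
    (hε1 : ε ≤ 1) (hr : 0 < r) (hw : 0 ≤ w) :
    |r ^ 2 * (w * bubbleSq c ε r * log (w * bubbleSq c ε r)) - c * ε * log ε * w| ≤
      c * ε * (|w * log w| + (|log c| + 2) * w + 3 * |w * log r|) := by
  set q := r ^ 2 / (ε ^ 2 + r ^ 2)
  have hq0 : 0 ≤ q := by positivity
  have hq1 : q ≤ 1 := div_le_one_of_le₀ (by nlinarith) (by positivity)
  have hlogs : |log (ε ^ 2 + r ^ 2)| ≤ 1 + 2 * |log r| :=
    abs_log_sq_add_sq_le (abs_le.2 ⟨by linarith, hε1⟩) hr.ne'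
  have hfirst : |q * (w * log w + w * log c - w * log (ε ^ 2 + r ^ 2))| ≤
      |w * log w| + w * |log c| + w * (1 + 2 * |log r|) :=
    calc _ = q * |w * log w + w * log c - w * log (ε ^ 2 + r ^ 2)| := by
          rw [abs_mul, abs_of_nonneg hq0]
      _ ≤ |w * log w + w * log c - w * log (ε ^ 2 + r ^ 2)| :=
        mul_le_of_le_one_left (abs_nonneg _) hq1
      _ ≤ |w * log w| + |w * log c| + |w * log (ε ^ 2 + r ^ 2)| :=
        (abs_sub _ _).trans (by gcongr; exact abs_add_le _ _)
      _ ≤ |w * log w| + w * |log c| + w * (1 + 2 * |log r|) := by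
        rw [abs_mul w (log c), abs_mul w (log (ε ^ 2 + r ^ 2)), abs_of_nonneg hw]
        gcongr
  have hsecond : |w * (ε ^ 2 / (ε ^ 2 + r ^ 2) * log ε)| ≤ w * (1 + |log r|) := by
    rw [abs_mul, abs_of_nonneg hw]
    exact mul_le_mul_of_nonneg_left (abs_sq_div_sq_add_sq_mul_log_le hε hε1 hr) hw
  calc _ = c * ε * |q * (w * log w + w * log c - w * log (ε ^ 2 + r ^ 2)) -
        w * (ε ^ 2 / (ε ^ 2 + r ^ 2) * log ε)| := by
        rw [sq_mul_mul_bubbleSq_mul_log_sub_eq w hc hε, abs_mul, abs_of_pos (mul_pos hc hε)]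
    _ ≤ c * ε * ((|w * log w| + w * |log c| + w * (1 + 2 * |log r|)) + w * (1 + |log r|)) := by
        gcongr
        exact (abs_sub _ _).trans (add_le_add hfirst hsecond)
    _ = c * ε * (|w * log w| + (|log c| + 2) * w + 3 * |w * log r|) := by
        rw [abs_mul w (log r), abs_of_nonneg hw]
        ring

theorem norm_integral_sub_integral_le_of_norm_sub_le {α F : Type*} [MeasurableSpace α]
    {μ : Measure α} [NormedAddCommGroup F] [NormedSpace ℝ F] {f g : α → F} {b : α → ℝ}
    (hf : AEStronglyMeasurable f μ) (hg : Integrable g μ) (hb : Integrable b μ)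
    (h : ∀ᵐ a ∂μ, ‖f a - g a‖ ≤ b a) :
    ‖(∫ a, f a ∂μ) - ∫ a, g a ∂μ‖ ≤ ∫ a, b a ∂μ := by
  have hfg : Integrable (f - g) μ := hb.mono' (hf.sub hg.aestronglyMeasurable) h
  have hf' : Integrable f μ := by simpa using hfg.add hg
  rw [← integral_sub hf' hg]
  exact norm_integral_le_of_norm_le hb h

theorem integrableOn_Ioi_of_intervalIntegrable_of_eq_zero {F : Type*} [NormedAddCommGroup F]
    {f : ℝ → F} {a b : ℝ} (hab : a ≤ b) (hf : IntervalIntegrable f volume a b)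
    (hf0 : ∀ r, b < r → f r = 0) : IntegrableOn f (Ioi a) :=
  ((intervalIntegrable_iff_integrableOn_Ioc_of_le hab).1 hf).of_forall_sdiff_eq_zero
    measurableSet_Ioi fun r hr ↦ hf0 r (not_le.1 fun h ↦ hr.2 ⟨hr.1, h⟩)

/-- The weights `w` on `(0, ∞)` for which the expansion holds with remainder `O(ε)`; the cut-off
bubble has `w = ψ²`. Integrability is with respect to `dr`, not to the radial measure `r² dr`. -/
structure IsLogIntegrableWeight (w : ℝ → ℝ) : Prop where
  nonneg : ∀ r, 0 < r → 0 ≤ w r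
  integrableOn : IntegrableOn w (Ioi 0)
  integrableOn_mul_log_self : IntegrableOn (fun r ↦ w r * log (w r)) (Ioi 0)
  integrableOn_mul_log : IntegrableOn (fun r ↦ w r * log r) (Ioi 0)

theorem IsLogIntegrableWeight.of_continuousOn {w : ℝ → ℝ} {R : ℝ} (hR : 0 ≤ R)
    (hw : ContinuousOn w (Icc 0 R)) (hnonneg : ∀ r, 0 < r → 0 ≤ w r)
    (hw0 : ∀ r, R < r → w r = 0) : IsLogIntegrableWeight w where
  nonneg := hnonneg
  integrableOn :=
    integrableOn_Ioi_of_intervalIntegrable_of_eq_zero hR (hw.intervalIntegrable_of_Icc hR) hw0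
  integrableOn_mul_log_self :=
    integrableOn_Ioi_of_intervalIntegrable_of_eq_zero hR
      ((continuous_mul_log.comp_continuousOn hw).intervalIntegrable_of_Icc hR)
      fun r hr ↦ by simp [hw0 r hr]
  integrableOn_mul_log :=
    integrableOn_Ioi_of_intervalIntegrable_of_eq_zero hR
      (intervalIntegral.intervalIntegrable_log'.continuousOn_mul (by rwa [uIcc_of_le hR]))
      fun r hr ↦ by simp [hw0 r hr]

theorem IsLogIntegrableWeight.abs_integral_sub_le {c ε : ℝ} {w : ℝ → ℝ}
    (hw : IsLogIntegrableWeight w) (hc : 0 < c) (hε : 0 < ε) (hε1 : ε ≤ 1) :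
    |(∫ r in Ioi 0, r ^ 2 * (w r * bubbleSq c ε r * log (w r * bubbleSq c ε r))) -
        c * ε * log ε * ∫ r in Ioi 0, w r| ≤
      c * ε * ∫ r in Ioi 0, (|w r * log (w r)| + (|log c| + 2) * w r + 3 * |w r * log r|) := by
  have hmeas : AEStronglyMeasurable
      (fun r ↦ r ^ 2 * (w r * bubbleSq c ε r * log (w r * bubbleSq c ε r)))
      (volume.restrict (Ioi 0)) := by
    have hg : AEMeasurable (fun r ↦ w r * bubbleSq c ε r) (volume.restrict (Ioi 0)) :=
      hw.integrableOn.aemeasurable.mul (measurable_bubbleSq c ε).aemeasurable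
    exact (AEMeasurable.mul (by fun_prop) (hg.mul hg.log)).aestronglyMeasurable
  rw [← integral_const_mul, ← integral_const_mul, ← norm_eq_abs]
  exact norm_integral_sub_integral_le_of_norm_sub_le hmeas (hw.integrableOn.const_mul _)
    (((hw.integrableOn_mul_log_self.abs.add (hw.integrableOn.const_mul _)).add
      (hw.integrableOn_mul_log.abs.const_mul 3)).const_mul _)
    (ae_restrict_of_forall_mem measurableSet_Ioi fun r hr ↦
      abs_sq_mul_mul_bubbleSq_mul_log_sub_le hc hε hε1 hr (hw.nonneg r hr))

theorem integral_fun_norm_of_finrank_eq_three {E F : Type*} [NormedAddCommGroup E]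
    [InnerProductSpace ℝ E] [FiniteDimensional ℝ E] [MeasurableSpace E] [BorelSpace E]
    [NormedAddCommGroup F] [NormedSpace ℝ F] (hE : finrank ℝ E = 3) (f : ℝ → F) :
    ∫ x : E, f ‖x‖ = (4 * π) • ∫ r in Ioi (0 : ℝ), r ^ 2 • f r := by
  have : Nontrivial E := nontrivial_of_finrank_pos (R := ℝ) (by omega)
  have hball : (volume : Measure E).real (Metric.ball 0 1) = 4 / 3 * π := by
    rw [Measure.real, InnerProductSpace.volume_ball_of_dim_odd (k := 1) hE]
    norm_num [hE, Nat.doubleFactorial]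
    rw [ENNReal.toReal_ofReal (by positivity)]
    ring
  rw [integral_fun_norm_addHaar volume f, hE, hball, ← Nat.cast_smul_eq_nsmul ℝ, smul_smul]
  congr 1
  push_cast
  ring

theorem integral_Ioi_eq_intervalIntegral_of_eq_zero {F : Type*} [NormedAddCommGroup F]
    [NormedSpace ℝ F] {f : ℝ → F} {a b : ℝ} (hab : a ≤ b) (hf0 : ∀ r, b < r → f r = 0) :
    ∫ r in Ioi a, f r = ∫ r in a..b, f r := by
  rw [intervalIntegral.integral_of_le hab]
  exact setIntegral_eq_of_subset_of_forall_sdiff_eq_zero measurableSet_Ioi Ioc_subset_Ioi_self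
    fun r hr ↦ hf0 r (not_le.1 fun h ↦ hr.2 ⟨hr.1, h⟩)

theorem stmt_16_general {E : Type*} [NormedAddCommGroup E] [InnerProductSpace ℝ E]
    [FiniteDimensional ℝ E] [MeasurableSpace E] [BorelSpace E] (hE : finrank ℝ E = 3) {ψ : ℝ → ℝ}
    (hψ : IsLogIntegrableWeight fun r ↦ ψ r ^ 2) {u : ℝ → E → ℝ}
    (hu : ∀ ε : ℝ, 0 < ε → ∀ x : E,
      u ε x = (3 : ℝ) ^ ((1 : ℝ) / 4) * (ε / (ε ^ 2 + ‖x‖ ^ 2)) ^ ((1 : ℝ) / 2)) :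
    ∃ C : ℝ, 0 < C ∧ ∀ ε ∈ Ioc (0 : ℝ) 1,
      |(∫ x : E, (ψ ‖x‖ * u ε x) ^ 2 * log ((ψ ‖x‖ * u ε x) ^ 2)) -
        √3 * (4 * π) * (∫ r in Ioi 0, ψ r ^ 2) * ε * log ε| ≤ C * ε := by
  set K := ∫ r in Ioi 0,
    (|ψ r ^ 2 * log (ψ r ^ 2)| + (|log √3| + 2) * ψ r ^ 2 + 3 * |ψ r ^ 2 * log r|)
  have : 0 ≤ K := integral_nonneg fun r ↦ by positivity
  refine ⟨4 * π * √3 * K + 1, by positivity, fun ε ⟨hε, hε1⟩ ↦ ?_⟩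
  have hU (x : E) : (ψ ‖x‖ * u ε x) ^ 2 = ψ ‖x‖ ^ 2 * bubbleSq √3 ε ‖x‖ := by
    rw [hu ε hε, mul_pow, sq_rpow_quarter_mul_rpow_half (by norm_num) (by positivity), bubbleSq]
  simp_rw [hU]
  rw [integral_fun_norm_of_finrank_eq_three hE fun r ↦
    ψ r ^ 2 * bubbleSq √3 ε r * log (ψ r ^ 2 * bubbleSq √3 ε r)]
  simp only [smul_eq_mul]
  have hscale (J : ℝ) : √3 * (4 * π) * J * ε * log ε = 4 * π * (√3 * ε * log ε * J) := by ring
  rw [hscale, ← mul_sub, abs_mul, abs_of_pos (by positivity : 0 < 4 * π)]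
  calc _ ≤ 4 * π * (√3 * ε * K) := by
        gcongr
        exact hψ.abs_integral_sub_le (by positivity) hε hε1
    _ ≤ (4 * π * √3 * K + 1) * ε := by linarith

end General

/-- Logarithmic estimate for `N = 3` (Lemma 3.6, (3.15)): with `U_ε(x) = ψ(|x|) u_ε(x)`,
`∫ U_ε² log U_ε² = √3 ω₃ (∫_0^{2ρ} ψ(r)² dr) ε log ε + O(ε)`, where `ω₃ = 4π`
(with the convention `0 log 0 = 0`, automatic since `Real.log 0 = 0`). -/
theorem stmt_16 (ρ : ℝ) (hρ : 0 < ρ) (hρ1 : 4 * ρ ^ 2 < 1)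
    (ψ : ℝ → ℝ) (hψs : ContDiff ℝ 1 ψ)
    (hψ1 : ∀ r : ℝ, 0 ≤ r → r ≤ ρ → ψ r = 1)
    (hψ01 : ∀ r : ℝ, ρ ≤ r → r ≤ 2 * ρ → ψ r ∈ Set.Icc (0 : ℝ) 1)
    (hψ0 : ∀ r : ℝ, 2 * ρ ≤ r → ψ r = 0)
    (u : ℝ → EuclideanSpace ℝ (Fin 3) → ℝ)
    (hu : ∀ ε : ℝ, 0 < ε → ∀ x : EuclideanSpace ℝ (Fin 3),
      u ε x = (3 : ℝ) ^ ((1 : ℝ) / 4) * (ε / (ε ^ 2 + ‖x‖ ^ 2)) ^ ((1 : ℝ) / 2)) :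
    ∃ C : ℝ, 0 < C ∧ ∃ ε₀ ∈ Set.Ioo (0 : ℝ) 1, ∀ ε ∈ Set.Ioo (0 : ℝ) ε₀,
      |(∫ x : EuclideanSpace ℝ (Fin 3),
          (ψ ‖x‖ * u ε x) ^ 2 * Real.log ((ψ ‖x‖ * u ε x) ^ 2)) -
        Real.sqrt 3 * (4 * Real.pi) * (∫ r in (0:ℝ)..(2 * ρ), (ψ r) ^ 2) * ε *
          Real.log ε| ≤ C * ε := by
  have hψsq (r : ℝ) (hr : 2 * ρ < r) : ψ r ^ 2 = 0 := by simp [hψ0 r hr.le]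
  obtain ⟨C, hC, hle⟩ := stmt_16_general finrank_euclideanSpace_fin
    (.of_continuousOn (by positivity) (hψs.continuous.pow 2).continuousOn
      (fun r _ ↦ sq_nonneg (ψ r)) hψsq) hu
  rw [integral_Ioi_eq_intervalIntegral_of_eq_zero (by positivity) hψsq] at hle
  exact ⟨C, hC, 1 / 2, by norm_num, fun ε hε ↦ hle ε ⟨hε.1, by linarith [hε.2]⟩⟩
end

section
/- Let N ≥ 5 be an integer, λ ∈ ℝ and μ > 0. With u_ε, Ω, φ, U_ε and the functional I as in the context, there exists ε₀ > 0 such that for every ε ∈ (0, ε₀) and every t ≥ 0, I(t·U_ε) < K_N / N, where K_N = ∫_{ℝ^N} |∇u_1(x)|² dx. -/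
open MeasureTheory

/-!
In dimension `d` and in the blow-up variable `y = x / ε`, the test function becomes
`w y = φ (ε y) V y`, where `V` is the bubble of width `1`. Since `φ = 1` near `0`, its Dirichlet
integral is at most `K + A ε²` and its critical integral `P` satisfies `K - B ε² ≤ P ≤ K`, with the
same `K` for both because `∫ ‖∇V‖² = ∫ V ^ 2*`. With `s = t²`, Young's inequality bounds the energy
without the lower order terms by `K / d + O(ε²) s`. The lower order terms carry a factor `ε²`, as
`V` lies in `L²` when `d ≥ 5`, and the logarithmic one contains `-μ ε² s (d - 2) |log ε| ∫ w² / 2`.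
As soon as `s` stays away from `0` this beats every `O(ε²) s`, while for small `s` the energy is
about `s K / 2`, well below `K / d`.
-/

open Filter Topology Metric

section RealInequalities

theorem negMulLog_le_rpow_div {x δ : ℝ} (hx : 0 ≤ x) (hδ : 0 < δ) :
    Real.negMulLog x ≤ x ^ (1 - δ) / δ := by
  rcases hx.eq_or_lt with rfl | hx
  · simpa using div_nonneg (Real.zero_rpow_nonneg _) hδ.le
  · calc Real.negMulLog x = x * Real.log x⁻¹ := by rw [Real.negMulLog, Real.log_inv]; ring
      _ ≤ x * (x⁻¹ ^ δ / δ) := by gcongr; exact Real.log_le_rpow_div (by positivity) hδ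
      _ = x ^ (1 - δ) / δ := by
        rw [Real.inv_rpow hx.le, Real.rpow_sub hx, Real.rpow_one]; ring

theorem mul_le_rpow_div_mul_add {p q s P K : ℝ} (hpq : p.HolderConjugate q)
    (hs : 0 ≤ s) (hP : 0 ≤ P) (hPK : P ≤ K) :
    s * K ≤ s ^ p * P / p + K / q + s * (K - P) := by
  have young : s ≤ s ^ p / p + 1 / q := by
    simpa using Real.young_inequality_of_nonneg hs zero_le_one hpq
  have hq : 0 < q := hpq.symm.pos
  calc s * K = s * P + s * (K - P) := by ring
    _ ≤ (s ^ p / p + 1 / q) * P + s * (K - P) := by gcongr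
    _ = s ^ p * P / p + P / q + s * (K - P) := by ring
    _ ≤ s ^ p * P / p + K / q + s * (K - P) := by gcongr

/-- The energy of `√s • v` expressed through `G = ∫ ‖∇v‖²`, `P = ∫ v ^ 2*`, `M = ∫ v²` and the
entropy `H = -∫ v² log v²`. -/
noncomputable def fiberEnergy (d lam μ s G P M H : ℝ) : ℝ :=
  s / 2 * G - (d - 2) / (2 * d) * (s ^ (d / (d - 2)) * P) -
    s / 2 * (lam * M + μ * ((Real.log s - 1) * M - H))

variable {d lam μ K A B q Q D : ℝ}

theorem fiberEnergy_le {ε s G P M H : ℝ} (hμ : 0 ≤ μ) (hs : 0 ≤ s)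
    (hG : G ≤ K + A * ε ^ 2) (hM : 0 ≤ M) (hMQ : M ≤ Q) (hH : H ≤ D) :
    fiberEnergy d lam μ s G P (ε ^ 2 * M) (ε ^ 2 * ((d - 2) * Real.log ε * M + H)) ≤
      s / 2 * K - (d - 2) / (2 * d) * (s ^ (d / (d - 2)) * P) +
        ε ^ 2 / 2 * (s * (A + (|lam| + μ) * Q + μ * D -
          μ * M * (Real.log s - (d - 2) * Real.log ε))) := by
  have linear : (μ - lam) * M ≤ (|lam| + μ) * Q :=
    calc (μ - lam) * M ≤ (|lam| + μ) * M := by gcongr; linarith [neg_abs_le lam]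
      _ ≤ (|lam| + μ) * Q := by gcongr
  calc fiberEnergy d lam μ s G P (ε ^ 2 * M) (ε ^ 2 * ((d - 2) * Real.log ε * M + H))
      = s / 2 * G - (d - 2) / (2 * d) * (s ^ (d / (d - 2)) * P) +
          ε ^ 2 / 2 * (s * ((μ - lam) * M + μ * H -
            μ * M * (Real.log s - (d - 2) * Real.log ε))) := by
        rw [fiberEnergy]; ring
    _ ≤ s / 2 * (K + A * ε ^ 2) - (d - 2) / (2 * d) * (s ^ (d / (d - 2)) * P) +
          ε ^ 2 / 2 * (s * ((|lam| + μ) * Q + μ * D -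
            μ * M * (Real.log s - (d - 2) * Real.log ε))) := by
        gcongr
    _ = _ := by ring

theorem half_mul_sub_rpow_le {s P ε : ℝ} (hd : 2 < d) (hs : 0 ≤ s) (hP : 0 ≤ P)
    (hPK : P ≤ K) (hKP : K - B * ε ^ 2 ≤ P) :
    s / 2 * K - (d - 2) / (2 * d) * (s ^ (d / (d - 2)) * P) ≤
      K / d + ε ^ 2 / 2 * (s * B) := by
  have hd2 : 0 < d - 2 := sub_pos.2 hd
  have conj : (d / (d - 2)).HolderConjugate (d / 2) := by
    rw [Real.holderConjugate_iff, one_lt_div hd2]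
    exact ⟨by linarith, by field_simp; ring⟩
  have young := mul_le_rpow_div_mul_add conj hs hP hPK
  have gap : s * (K - P) ≤ s * (B * ε ^ 2) := by gcongr; linarith
  calc s / 2 * K - (d - 2) / (2 * d) * (s ^ (d / (d - 2)) * P)
      = (s * K - s ^ (d / (d - 2)) * P / (d / (d - 2))) / 2 := by field_simp
    _ ≤ (K / (d / 2) + s * (B * ε ^ 2)) / 2 := by linarith
    _ = K / d + ε ^ 2 / 2 * (s * B) := by field_simp

theorem half_mul_add_lt_of_le_one_div {s M ε E : ℝ} (hd : 2 < d) (hμ : 0 ≤ μ) (hK : 0 < K)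
    (hM : 0 ≤ M) (hMQ : M ≤ Q) (hs : 0 ≤ s) (hsd : s ≤ 1 / d) (hε : 0 ≤ ε) (hε1 : ε ≤ 1)
    (hsmall : ε ^ 2 * (|E| + μ * Q) < K / d) :
    s / 2 * K + ε ^ 2 / 2 * (s * (E - μ * M * (Real.log s - (d - 2) * Real.log ε))) < K / d := by
  have hd0 : 0 < d := by linarith
  have hs1 : s ≤ 1 := hsd.trans (by rw [div_le_one hd0]; linarith)
  have scale : 0 ≤ -((d - 2) * Real.log ε) := by
    have := mul_nonpos_of_nonneg_of_nonpos (sub_nonneg.2 hd.le) (Real.log_nonpos hε hε1)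
    linarith
  have entropy : -(s * Real.log s) ≤ 1 := by
    have := Real.negMulLog_le_one_sub_self hs
    rw [Real.negMulLog] at this
    linarith
  have bracket : s * (E - μ * M * (Real.log s - (d - 2) * Real.log ε)) ≤ |E| + μ * Q :=
    calc s * (E - μ * M * (Real.log s - (d - 2) * Real.log ε))
        = s * E + μ * M * (-(s * Real.log s)) - s * (μ * M * -((d - 2) * Real.log ε)) := by ring
      _ ≤ s * E + μ * M * (-(s * Real.log s)) := sub_le_self _ (by positivity)
      _ ≤ s * |E| + μ * M * 1 := by gcongr; exact le_abs_self E
      _ ≤ 1 * |E| + μ * Q * 1 := by gcongr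
      _ = |E| + μ * Q := by ring
  calc s / 2 * K + ε ^ 2 / 2 * (s * (E - μ * M * (Real.log s - (d - 2) * Real.log ε)))
      ≤ 1 / d / 2 * K + ε ^ 2 / 2 * (|E| + μ * Q) := by gcongr
    _ < K / d := by linear_combination hsmall / 2

theorem add_lt_mul_log_sub {s M ε E : ℝ} (hd : 0 < d) (hμ : 0 < μ) (hq : 0 < q) (hqM : q ≤ M)
    (hs : 1 / d < s) (hε : (|E| + |B|) / (μ * q) < -Real.log d - (d - 2) * Real.log ε) :
    E + B < μ * M * (Real.log s - (d - 2) * Real.log ε) := by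
  have hM : 0 < M := hq.trans_le hqM
  have hlog : -Real.log d < Real.log s := by
    rw [← Real.log_inv, ← one_div]
    exact Real.log_lt_log (by positivity) hs
  calc E + B ≤ |E| + |B| := add_le_add (le_abs_self E) (le_abs_self B)
    _ = μ * q * ((|E| + |B|) / (μ * q)) := (mul_div_cancel₀ _ (by positivity)).symm
    _ ≤ μ * M * ((|E| + |B|) / (μ * q)) := by gcongr
    _ < μ * M * (Real.log s - (d - 2) * Real.log ε) := by gcongr; linarith

theorem eventually_fiberEnergy_lt (hd : 2 < d) (hμ : 0 < μ) (hK : 0 < K) (hq : 0 < q) :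
    ∀ᶠ ε in 𝓝[>] (0 : ℝ), ∀ s G P M H : ℝ, 0 ≤ s → G ≤ K + A * ε ^ 2 → 0 ≤ P → P ≤ K →
      K - B * ε ^ 2 ≤ P → q ≤ M → M ≤ Q → H ≤ D →
      fiberEnergy d lam μ s G P (ε ^ 2 * M) (ε ^ 2 * ((d - 2) * Real.log ε * M + H)) < K / d := by
  set E := A + (|lam| + μ) * Q + μ * D with hE
  have small : ∀ᶠ ε in 𝓝[>] (0 : ℝ), ε ^ 2 * (|E| + μ * Q) < K / d := by
    have : Tendsto (fun ε : ℝ => ε ^ 2 * (|E| + μ * Q)) (𝓝[>] 0) (𝓝 0) :=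
      (Continuous.tendsto' (by fun_prop) 0 0 (by simp)).mono_left nhdsWithin_le_nhds
    exact this.eventually_lt_const (by positivity)
  have dominant : ∀ᶠ ε in 𝓝[>] (0 : ℝ),
      (|E| + |B|) / (μ * q) < -Real.log d - (d - 2) * Real.log ε := by
    have : Tendsto (fun ε => -Real.log d - (d - 2) * Real.log ε) (𝓝[>] 0) atTop :=
      tendsto_const_nhds.add_atTop <| tendsto_neg_atBot_atTop.comp <|
        Real.tendsto_log_nhdsGT_zero.const_mul_atBot (sub_pos.2 hd)
    exact this.eventually_gt_atTop _
  filter_upwards [small, dominant, Ioc_mem_nhdsGT zero_lt_one]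
    with ε hsmall hdom hε s G P M H hs hG hP hPK hKP hqM hMQ hH
  have hM : 0 < M := hq.trans_le hqM
  refine (fiberEnergy_le hμ.le hs hG hM.le hMQ hH).trans_lt ?_
  rw [← hE]
  rcases le_or_gt s (1 / d) with hsd | hsd
  · have hsp : 0 ≤ (d - 2) / (2 * d) * (s ^ (d / (d - 2)) * P) :=
      mul_nonneg (div_nonneg (by linarith) (by linarith)) (by positivity)
    linarith [half_mul_add_lt_of_le_one_div hd hμ.le hK hM.le hMQ hs hsd hε.1.le hε.2 hsmall]
  · have hs0 : 0 < s := lt_trans (by positivity) hsd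
    have bracket := add_lt_mul_log_sub (by linarith) hμ hq hqM hsd hdom
    have neg : ε ^ 2 / 2 * (s * (E + B - μ * M * (Real.log s - (d - 2) * Real.log ε))) < 0 :=
      mul_neg_of_pos_of_neg (by have := hε.1; positivity)
        (mul_neg_of_pos_of_neg hs0 (by linarith))
    linarith [half_mul_sub_rpow_le hd hs hP hPK hKP]

end RealInequalities

section InnerProductSpace

variable {E : Type*} [NormedAddCommGroup E] [InnerProductSpace ℝ E]

local notation "dim" => (Module.finrank ℝ E : ℝ)

section Energy

/-- The dilation `x ↦ ε ^ (-(dim - 2) / 2) w (x / ε)` leaving both the Dirichlet integral and the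
integral of the critical power invariant. -/
noncomputable def criticalDilation (ε : ℝ) (w : E → ℝ) (x : E) : ℝ :=
  ε ^ (-((dim - 2) / 2)) * w (ε⁻¹ • x)

variable {ε : ℝ} {w v : E → ℝ}

theorem criticalDilation_nonneg (hε : 0 ≤ ε) (hw : ∀ y, 0 ≤ w y) (x : E) :
    0 ≤ criticalDilation ε w x :=
  mul_nonneg (Real.rpow_nonneg hε _) (hw _)

theorem criticalDilation_sq (hε : 0 < ε) (x : E) :
    criticalDilation ε w x ^ 2 = ε ^ (2 - dim) * w (ε⁻¹ • x) ^ 2 := by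
  rw [criticalDilation, mul_pow, ← Real.rpow_mul_natCast hε.le]
  congr 2
  push_cast
  ring

theorem norm_fderiv_criticalDilation_sq (hε : 0 < ε) (x : E) :
    ‖fderiv ℝ (criticalDilation ε w) x‖ ^ 2 = ε ^ (-dim) * ‖fderiv ℝ w (ε⁻¹ • x)‖ ^ 2 := by
  have hfd : fderiv ℝ (criticalDilation ε w) x =
      (ε ^ (-((dim - 2) / 2)) * ε⁻¹) • fderiv ℝ w (ε⁻¹ • x) := by
    have hsmul : criticalDilation ε w =
        ε ^ (-((dim - 2) / 2)) • fun x => w (ε⁻¹ • x) := rfl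
    rw [mul_smul, ← fderiv_comp_smul, hsmul, fderiv_const_smul_field, Pi.smul_apply]
  rw [hfd, norm_smul, mul_pow, Real.norm_of_nonneg (by positivity), ← Real.rpow_neg_one,
    ← Real.rpow_add hε, ← Real.rpow_mul_natCast hε.le]
  congr 2
  push_cast
  ring

theorem negMulLog_criticalDilation_sq (hε : 0 < ε) (x : E) :
    Real.negMulLog (criticalDilation ε w x ^ 2) = ε ^ (2 - dim) *
      ((dim - 2) * Real.log ε * w (ε⁻¹ • x) ^ 2 + Real.negMulLog (w (ε⁻¹ • x) ^ 2)) := by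
  rw [criticalDilation_sq hε, Real.negMulLog_mul, Real.negMulLog, Real.log_rpow hε]
  ring

variable [MeasurableSpace E] [BorelSpace E] [FiniteDimensional ℝ E]

/-- The energy functional of `-Δv = |v| ^ (2* - 2) v + lam v + μ v log v²` on `Ω`, with the lower
order terms and the critical power evaluated at the positive part of `v`. -/
noncomputable def logEnergy (lam μ : ℝ) (Ω : Set E) (v : E → ℝ) : ℝ :=
  (1 / 2) * (∫ x in Ω, ‖fderiv ℝ v x‖ ^ 2) -
    ((dim - 2) / (2 * dim)) * (∫ x in Ω, (max (v x) 0) ^ (2 * dim / (dim - 2))) -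
    (lam / 2) * (∫ x in Ω, (max (v x) 0) ^ 2) -
    (μ / 2) * (∫ x in Ω, (max (v x) 0) ^ 2 * (Real.log ((max (v x) 0) ^ 2) - 1))

theorem logEnergy_eq_univ_of_tsupport_subset {Ω : Set E} (hd : 2 < dim) (hv : tsupport v ⊆ Ω)
    (lam μ : ℝ) : logEnergy lam μ Ω v = logEnergy lam μ Set.univ v := by
  have hv0 : ∀ x ∉ Ω, v x = 0 := fun x hx => image_eq_zero_of_notMem_tsupport fun h => hx (hv h)
  have hfd0 : ∀ x ∉ Ω, fderiv ℝ v x = 0 := fun x hx =>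
    fderiv_of_notMem_tsupport ℝ fun h => hx (hv h)
  have hp : 2 * dim / (dim - 2) ≠ 0 := (div_pos (by linarith) (sub_pos.2 hd)).ne'
  have restrict {f : E → ℝ} (hf : ∀ x ∉ Ω, f x = 0) : ∫ x in Ω, f x = ∫ x, f x :=
    setIntegral_eq_integral_of_forall_compl_eq_zero hf
  simp only [logEnergy, setIntegral_univ]
  rw [restrict fun x hx => by simp [hfd0 x hx],
    restrict fun x hx => by simp [hv0 x hx, Real.zero_rpow hp],
    restrict fun x hx => by simp [hv0 x hx],
    restrict fun x hx => by simp [hv0 x hx]]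

theorem logEnergy_univ_const_mul {t : ℝ} (ht : 0 ≤ t) (hv : ∀ x, 0 ≤ v x)
    (hv2 : Integrable fun x => v x ^ 2)
    (hvlog : Integrable fun x => Real.negMulLog (v x ^ 2)) (lam μ : ℝ) :
    logEnergy lam μ Set.univ (fun x => t * v x) =
      fiberEnergy dim lam μ (t ^ 2) (∫ x, ‖fderiv ℝ v x‖ ^ 2)
        (∫ x, v x ^ (2 * dim / (dim - 2))) (∫ x, v x ^ 2) (∫ x, Real.negMulLog (v x ^ 2)) := by
  have hmax : ∀ x, max (t * v x) 0 = t * v x := fun x => max_eq_left (mul_nonneg ht (hv x))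
  have gradient : ∀ x, ‖fderiv ℝ (fun x => t * v x) x‖ ^ 2 = t ^ 2 * ‖fderiv ℝ v x‖ ^ 2 := by
    intro x
    have hfd : fderiv ℝ (fun x => t * v x) = t • fderiv ℝ v := fderiv_const_smul_field t
    rw [hfd, Pi.smul_apply, norm_smul, mul_pow, Real.norm_eq_abs, sq_abs]
  have power : ∀ x, (t * v x) ^ (2 * dim / (dim - 2)) =
      (t ^ 2) ^ (dim / (dim - 2)) * v x ^ (2 * dim / (dim - 2)) := by
    intro x
    rw [Real.mul_rpow ht (hv x), ← Real.rpow_natCast_mul ht]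
    congr 2
    push_cast
    ring
  have square : ∀ x, (t * v x) ^ 2 = t ^ 2 * v x ^ 2 := fun x => mul_pow _ _ _
  have logTerm : ∀ x, t ^ 2 * v x ^ 2 * (Real.log (t ^ 2 * v x ^ 2) - 1) =
      t ^ 2 * ((Real.log (t ^ 2) - 1) * v x ^ 2 - Real.negMulLog (v x ^ 2)) := by
    intro x
    have := Real.negMulLog_mul (t ^ 2) (v x ^ 2)
    simp only [Real.negMulLog] at this ⊢
    linear_combination -this
  simp only [logEnergy, setIntegral_univ, hmax, gradient, power, square, logTerm,
    integral_const_mul, fiberEnergy]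
  rw [integral_sub (hv2.const_mul _) hvlog, integral_const_mul]
  ring

theorem integral_norm_fderiv_criticalDilation_sq (hε : 0 < ε) :
    ∫ x, ‖fderiv ℝ (criticalDilation ε w) x‖ ^ 2 = ∫ y, ‖fderiv ℝ w y‖ ^ 2 := by
  simp only [norm_fderiv_criticalDilation_sq hε, integral_const_mul]
  rw [Measure.integral_comp_inv_smul_of_nonneg volume (fun y => ‖fderiv ℝ w y‖ ^ 2) hε.le,
    smul_eq_mul, ← Real.rpow_natCast, ← mul_assoc, ← Real.rpow_add hε, neg_add_cancel,
    Real.rpow_zero, one_mul]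

theorem integral_criticalDilation_rpow (hd : dim ≠ 2) (hε : 0 < ε) (hw : ∀ y, 0 ≤ w y) :
    ∫ x, criticalDilation ε w x ^ (2 * dim / (dim - 2)) = ∫ y, w y ^ (2 * dim / (dim - 2)) := by
  have hd2 : dim - 2 ≠ 0 := sub_ne_zero.2 hd
  have amplitude : (ε ^ (-((dim - 2) / 2))) ^ (2 * dim / (dim - 2)) = ε ^ (-dim) := by
    rw [← Real.rpow_mul hε.le]
    congr 1
    field_simp
  simp only [criticalDilation, Real.mul_rpow (Real.rpow_nonneg hε.le _) (hw _), amplitude,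
    integral_const_mul]
  rw [Measure.integral_comp_inv_smul_of_nonneg volume (fun y => w y ^ (2 * dim / (dim - 2))) hε.le,
    smul_eq_mul, ← Real.rpow_natCast, ← mul_assoc, ← Real.rpow_add hε, neg_add_cancel,
    Real.rpow_zero, one_mul]

theorem rpow_two_sub_finrank_mul_integral_comp_inv_smul (hε : 0 < ε) (f : E → ℝ) :
    ε ^ (2 - dim) * ∫ x, f (ε⁻¹ • x) = ε ^ 2 * ∫ y, f y := by
  rw [Measure.integral_comp_inv_smul_of_nonneg volume f hε.le, smul_eq_mul,
    ← Real.rpow_natCast, ← mul_assoc, ← Real.rpow_add hε, sub_add_cancel, Real.rpow_two]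

theorem integral_criticalDilation_sq (hε : 0 < ε) :
    ∫ x, criticalDilation ε w x ^ 2 = ε ^ 2 * ∫ y, w y ^ 2 := by
  simp only [criticalDilation_sq hε, integral_const_mul]
  exact rpow_two_sub_finrank_mul_integral_comp_inv_smul hε fun y => w y ^ 2

theorem integral_negMulLog_criticalDilation_sq (hε : 0 < ε) (hw2 : Integrable fun y => w y ^ 2)
    (hwlog : Integrable fun y => Real.negMulLog (w y ^ 2)) :
    ∫ x, Real.negMulLog (criticalDilation ε w x ^ 2) = ε ^ 2 *
      ((dim - 2) * Real.log ε * (∫ y, w y ^ 2) + ∫ y, Real.negMulLog (w y ^ 2)) := by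
  simp only [negMulLog_criticalDilation_sq hε, integral_const_mul]
  rw [rpow_two_sub_finrank_mul_integral_comp_inv_smul hε fun y =>
      (dim - 2) * Real.log ε * w y ^ 2 + Real.negMulLog (w y ^ 2),
    integral_add (hw2.const_mul _) hwlog, integral_const_mul]

theorem integrable_criticalDilation_sq (hε : 0 < ε) (hw2 : Integrable fun y => w y ^ 2) :
    Integrable fun x => criticalDilation ε w x ^ 2 := by
  simp only [criticalDilation_sq hε]
  exact (hw2.comp_smul (inv_ne_zero hε.ne')).const_mul _

theorem integrable_negMulLog_criticalDilation_sq (hε : 0 < ε)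
    (hw2 : Integrable fun y => w y ^ 2) (hwlog : Integrable fun y => Real.negMulLog (w y ^ 2)) :
    Integrable fun x => Real.negMulLog (criticalDilation ε w x ^ 2) := by
  simp only [negMulLog_criticalDilation_sq hε]
  exact (((hw2.const_mul _).add hwlog).comp_smul (inv_ne_zero hε.ne')).const_mul _

theorem logEnergy_univ_mul_criticalDilation {t : ℝ} (hd : dim ≠ 2) (hε : 0 < ε) (ht : 0 ≤ t)
    (hw : ∀ y, 0 ≤ w y) (hw2 : Integrable fun y => w y ^ 2)
    (hwlog : Integrable fun y => Real.negMulLog (w y ^ 2)) (lam μ : ℝ) :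
    logEnergy lam μ Set.univ (fun x => t * criticalDilation ε w x) =
      fiberEnergy dim lam μ (t ^ 2) (∫ y, ‖fderiv ℝ w y‖ ^ 2)
        (∫ y, w y ^ (2 * dim / (dim - 2))) (ε ^ 2 * ∫ y, w y ^ 2)
        (ε ^ 2 * ((dim - 2) * Real.log ε * (∫ y, w y ^ 2) + ∫ y, Real.negMulLog (w y ^ 2))) := by
  rw [logEnergy_univ_const_mul ht (criticalDilation_nonneg hε.le hw)
      (integrable_criticalDilation_sq hε hw2)
      (integrable_negMulLog_criticalDilation_sq hε hw2 hwlog),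
    integral_norm_fderiv_criticalDilation_sq hε, integral_criticalDilation_rpow hd hε hw,
    integral_criticalDilation_sq hε, integral_negMulLog_criticalDilation_sq hε hw2 hwlog]

end Energy

section Bracket

variable {s : ℝ}

theorem one_add_sq_rpow_one_sub (x s : ℝ) :
    (1 + x ^ 2) ^ (1 - s) = (1 + x ^ 2) * (1 + x ^ 2) ^ (-s) := by
  rw [sub_eq_add_neg, Real.rpow_add (by positivity), Real.rpow_one]

variable [MeasurableSpace E] [BorelSpace E] [FiniteDimensional ℝ E]

theorem integrable_one_add_norm_sq_rpow_neg (hs : dim < 2 * s) :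
    Integrable fun y : E => (1 + ‖y‖ ^ 2) ^ (-s) := by
  have := integrable_rpow_neg_one_add_norm_sq (E := E) (μ := volume) hs
  rwa [show -(2 * s) / 2 = -s by ring] at this

theorem integrable_norm_sq_mul_one_add_norm_sq_rpow_neg (hs : dim + 2 < 2 * s) :
    Integrable fun y : E => ‖y‖ ^ 2 * (1 + ‖y‖ ^ 2) ^ (-s) := by
  have h := (integrable_one_add_norm_sq_rpow_neg (E := E) (s := s - 1) (by linarith)).sub
    (integrable_one_add_norm_sq_rpow_neg (s := s) (by linarith))
  refine h.congr (.of_forall fun y => ?_)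
  simp only [Pi.sub_apply, neg_sub, one_add_sq_rpow_one_sub]
  ring

theorem hasDerivAt_pow_mul_one_add_sq_rpow {n : ℕ} (hn : n ≠ 0) (s r : ℝ) :
    HasDerivAt (fun r : ℝ => r ^ n * (1 + r ^ 2) ^ (1 - s))
      (r ^ (n - 1) * (n * (1 + r ^ 2) ^ (-s) -
        (2 * s - 2 - n) * (r ^ 2 * (1 + r ^ 2) ^ (-s)))) r := by
  have hbase : HasDerivAt (fun r : ℝ => 1 + r ^ 2) (2 * r) r := by
    simpa using (hasDerivAt_pow 2 r).const_add 1
  have hrpow := hbase.rpow_const (p := 1 - s) (Or.inl (by positivity))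
  convert! (hasDerivAt_pow n r).mul hrpow using 1
  rw [one_add_sq_rpow_one_sub, ← mul_pow_sub_one hn r, sub_sub_cancel_left]
  ring

theorem tendsto_pow_mul_one_add_sq_rpow_atTop {n : ℕ} (hs : n + 2 < 2 * s) :
    Tendsto (fun r : ℝ => r ^ n * (1 + r ^ 2) ^ (1 - s)) atTop (𝓝 0) := by
  have hlim := tendsto_rpow_neg_atTop (y := 2 * s - 2 - n) (by linarith)
  refine squeeze_zero' ?_ ?_ hlim
  · filter_upwards [eventually_ge_atTop 0] with r hr
    positivity
  · filter_upwards [eventually_gt_atTop 0] with r hr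
    calc r ^ n * (1 + r ^ 2) ^ (1 - s) ≤ r ^ n * (r ^ 2) ^ (1 - s) := by
          refine mul_le_mul_of_nonneg_left ?_ (by positivity)
          exact Real.rpow_le_rpow_of_nonpos (by positivity) (by linarith)
            (by linarith [n.cast_nonneg (α := ℝ)])
      _ = r ^ (-(2 * s - 2 - n)) := by
          rw [← Real.rpow_natCast_mul hr.le, ← Real.rpow_natCast, ← Real.rpow_add hr]
          congr 1
          push_cast
          ring

theorem integral_norm_sq_mul_one_add_norm_sq_rpow_neg [Nontrivial E] (hs : dim + 2 < 2 * s) :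
    (2 * s - 2 - dim) * ∫ y : E, ‖y‖ ^ 2 * (1 + ‖y‖ ^ 2) ^ (-s) =
      dim * ∫ y : E, (1 + ‖y‖ ^ 2) ^ (-s) := by
  have hint := integrable_one_add_norm_sq_rpow_neg (E := E) (s := s) (by linarith)
  have hint2 := integrable_norm_sq_mul_one_add_norm_sq_rpow_neg hs
  set f : ℝ → ℝ := fun r =>
    dim * (1 + r ^ 2) ^ (-s) - (2 * s - 2 - dim) * (r ^ 2 * (1 + r ^ 2) ^ (-s)) with hf
  have hfint : Integrable fun y : E => f ‖y‖ := (hint.const_mul _).sub (hint2.const_mul _)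
  have radial : ∫ r in Set.Ioi (0 : ℝ), r ^ (Module.finrank ℝ E - 1) • f r = 0 := by
    refine (integral_Ioi_of_hasDerivAt_of_tendsto' (fun r _ =>
        hasDerivAt_pow_mul_one_add_sq_rpow Module.finrank_pos.ne' s r)
      ((integrable_fun_norm_addHaar volume).1 hfint)
      (tendsto_pow_mul_one_add_sq_rpow_atTop hs)).trans ?_
    simp [Module.finrank_pos.ne']
  have total : ∫ y : E, f ‖y‖ = 0 := by
    rw [integral_fun_norm_addHaar volume f, radial, smul_zero, smul_zero]
  simp only [hf] at total
  rw [integral_sub (hint.const_mul _) (hint2.const_mul _), integral_const_mul,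
    integral_const_mul] at total
  linarith

end Bracket

section TalentiBubble

variable (E) in
/-- The normalising constant of the Aubin–Talenti bubbles, for which they solve
`-Δu = u ^ (2* - 1)`. -/
noncomputable def talentiConst : ℝ := (dim * (dim - 2)) ^ ((dim - 2) / 4)

/-- The Aubin–Talenti bubble of width `ε` centred at the origin. -/
noncomputable def talentiBubble (ε : ℝ) (x : E) : ℝ :=
  talentiConst E * (ε / (ε ^ 2 + ‖x‖ ^ 2)) ^ ((dim - 2) / 2)

theorem talentiBubble_one (y : E) :
    talentiBubble 1 y = talentiConst E * (1 + ‖y‖ ^ 2) ^ (-((dim - 2) / 2)) := by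
  rw [talentiBubble, one_pow, one_div, Real.inv_rpow (by positivity), Real.rpow_neg (by positivity)]

theorem talentiBubble_eq_criticalDilation {ε : ℝ} (hε : 0 < ε) :
    talentiBubble (E := E) ε = criticalDilation ε (talentiBubble 1) := by
  funext x
  have hbase : ε / (ε ^ 2 + ‖x‖ ^ 2) = ε⁻¹ * (1 / (1 ^ 2 + ‖ε⁻¹ • x‖ ^ 2)) := by
    rw [norm_smul, norm_inv, Real.norm_of_nonneg hε.le]
    field_simp
  rw [criticalDilation, talentiBubble, talentiBubble, hbase,
    Real.mul_rpow (by positivity) (by positivity), Real.inv_rpow hε.le, ← Real.rpow_neg hε.le]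
  ring

theorem talentiConst_pos (hd : 2 < dim) : 0 < talentiConst E := by
  have : 0 < dim - 2 := sub_pos.2 hd
  unfold talentiConst
  positivity

theorem talentiBubble_one_pos (hd : 2 < dim) (y : E) : 0 < talentiBubble 1 y := by
  rw [talentiBubble_one]
  exact mul_pos (talentiConst_pos hd) (by positivity)

theorem hasFDerivAt_talentiBubble_one (y : E) :
    HasFDerivAt (talentiBubble 1)
      (-(talentiConst E * (dim - 2) * (1 + ‖y‖ ^ 2) ^ (-(dim / 2))) • innerSL ℝ y) y := by
  have hbase : HasFDerivAt (fun y : E => 1 + ‖y‖ ^ 2) (2 • innerSL ℝ y) y :=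
    (hasStrictFDerivAt_norm_sq y).hasFDerivAt.const_add 1
  have hpow := (hbase.rpow_const (p := -((dim - 2) / 2)) (Or.inl (by positivity))).const_mul
    (talentiConst E)
  have hexp : -((dim - 2) / 2) - 1 = -(dim / 2) := by ring
  convert! hpow using 1
  · exact funext talentiBubble_one
  · rw [hexp]
    ext z
    simp only [neg_smul, neg_apply, smul_apply, coe_innerSL_apply, smul_eq_mul, neg_mul,
      nsmul_eq_mul, Nat.cast_ofNat, mul_neg, neg_inj]
    ring

theorem differentiable_talentiBubble_one : Differentiable ℝ (talentiBubble (E := E) 1) :=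
  fun y => (hasFDerivAt_talentiBubble_one y).differentiableAt

theorem norm_fderiv_talentiBubble_one (hd : 2 < dim) (y : E) :
    ‖fderiv ℝ (talentiBubble 1) y‖ =
      talentiConst E * (dim - 2) * (1 + ‖y‖ ^ 2) ^ (-(dim / 2)) * ‖y‖ := by
  have hC := talentiConst_pos hd
  have : 0 < dim - 2 := sub_pos.2 hd
  rw [(hasFDerivAt_talentiBubble_one y).fderiv, norm_smul, innerSL_apply_norm, norm_neg,
    Real.norm_of_nonneg (by positivity)]

theorem norm_fderiv_talentiBubble_one_sq (hd : 2 < dim) (y : E) :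
    ‖fderiv ℝ (talentiBubble 1) y‖ ^ 2 =
      talentiConst E ^ 2 * (dim - 2) ^ 2 * (‖y‖ ^ 2 * (1 + ‖y‖ ^ 2) ^ (-dim)) := by
  have hsq : ((1 + ‖y‖ ^ 2) ^ (-(dim / 2))) ^ 2 = (1 + ‖y‖ ^ 2) ^ (-dim) := by
    rw [← Real.rpow_mul_natCast (by positivity)]
    congr 1
    push_cast
    ring
  rw [norm_fderiv_talentiBubble_one hd, ← hsq]
  ring

theorem norm_fderiv_talentiBubble_one_mul_norm_le (hd : 2 < dim) (y : E) :
    ‖fderiv ℝ (talentiBubble 1) y‖ * ‖y‖ ≤ (dim - 2) * talentiBubble 1 y := by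
  have hC := talentiConst_pos hd
  have : 0 < dim - 2 := sub_pos.2 hd
  have hpow : (1 + ‖y‖ ^ 2) ^ (-((dim - 2) / 2)) =
      (1 + ‖y‖ ^ 2) * (1 + ‖y‖ ^ 2) ^ (-(dim / 2)) := by
    rw [← one_add_sq_rpow_one_sub]
    congr 1
    ring
  rw [norm_fderiv_talentiBubble_one hd, talentiBubble_one, hpow]
  calc talentiConst E * (dim - 2) * (1 + ‖y‖ ^ 2) ^ (-(dim / 2)) * ‖y‖ * ‖y‖
      = talentiConst E * (dim - 2) * (1 + ‖y‖ ^ 2) ^ (-(dim / 2)) * ‖y‖ ^ 2 := by ring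
    _ ≤ talentiConst E * (dim - 2) * (1 + ‖y‖ ^ 2) ^ (-(dim / 2)) * (1 + ‖y‖ ^ 2) := by
      gcongr
      exact le_add_of_nonneg_left zero_le_one
    _ = (dim - 2) * (talentiConst E * ((1 + ‖y‖ ^ 2) * (1 + ‖y‖ ^ 2) ^ (-(dim / 2)))) := by ring

theorem talentiBubble_one_rpow (hd : 2 < dim) (p : ℝ) (y : E) :
    talentiBubble 1 y ^ p = talentiConst E ^ p * (1 + ‖y‖ ^ 2) ^ (-(p * (dim - 2) / 2)) := by
  rw [talentiBubble_one, Real.mul_rpow (talentiConst_pos hd).le (by positivity),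
    ← Real.rpow_mul (by positivity)]
  congr 2
  ring

theorem talentiBubble_one_rpow_critical (hd : 2 < dim) (y : E) :
    talentiBubble 1 y ^ (2 * dim / (dim - 2)) =
      talentiConst E ^ 2 * (dim * (dim - 2)) * (1 + ‖y‖ ^ 2) ^ (-dim) := by
  have : 0 < dim - 2 := sub_pos.2 hd
  have hbase : 0 < dim * (dim - 2) := by positivity
  have hconst : talentiConst E ^ (2 * dim / (dim - 2)) =
      talentiConst E ^ 2 * (dim * (dim - 2)) := by
    rw [talentiConst, ← Real.rpow_mul hbase.le, ← Real.rpow_mul_natCast hbase.le,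
      ← Real.rpow_add_one hbase.ne']
    congr 1
    push_cast
    field_simp
    ring
  rw [talentiBubble_one_rpow hd, hconst]
  congr 2
  field_simp

variable [MeasurableSpace E] [BorelSpace E] [FiniteDimensional ℝ E]

theorem integrable_talentiBubble_one_rpow {p : ℝ} (hd : 2 < dim) (hp : dim < p * (dim - 2)) :
    Integrable fun y : E => talentiBubble 1 y ^ p := by
  simp only [talentiBubble_one_rpow hd]
  exact (integrable_one_add_norm_sq_rpow_neg (by linarith)).const_mul _

theorem integrable_talentiBubble_one_sq (hd : 4 < dim) :
    Integrable fun y : E => talentiBubble 1 y ^ 2 := by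
  simpa only [Real.rpow_two] using
    integrable_talentiBubble_one_rpow (E := E) (p := 2) (by linarith) (by linarith)

theorem integrable_norm_fderiv_talentiBubble_one_sq (hd : 2 < dim) :
    Integrable fun y : E => ‖fderiv ℝ (talentiBubble 1) y‖ ^ 2 := by
  simp only [norm_fderiv_talentiBubble_one_sq hd]
  exact (integrable_norm_sq_mul_one_add_norm_sq_rpow_neg (by linarith)).const_mul _

theorem integrable_talentiBubble_one_rpow_critical (hd : 2 < dim) :
    Integrable fun y : E => talentiBubble 1 y ^ (2 * dim / (dim - 2)) := by
  refine integrable_talentiBubble_one_rpow hd ?_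
  rw [div_mul_cancel₀ _ (sub_pos.2 hd).ne']
  linarith

theorem integrable_norm_sq_mul_talentiBubble_one_rpow_critical (hd : 2 < dim) :
    Integrable fun y : E => ‖y‖ ^ 2 * talentiBubble 1 y ^ (2 * dim / (dim - 2)) := by
  simp only [talentiBubble_one_rpow_critical hd, mul_left_comm (‖_‖ ^ 2)]
  exact (integrable_norm_sq_mul_one_add_norm_sq_rpow_neg (by linarith)).const_mul _

theorem integral_norm_fderiv_talentiBubble_one_sq (hd : 2 < dim) :
    ∫ y : E, ‖fderiv ℝ (talentiBubble 1) y‖ ^ 2 =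
      ∫ y : E, talentiBubble 1 y ^ (2 * dim / (dim - 2)) := by
  have : Nontrivial E := Module.nontrivial_of_finrank_pos (R := ℝ)
    (by exact_mod_cast zero_lt_two.trans hd)
  simp only [norm_fderiv_talentiBubble_one_sq hd, talentiBubble_one_rpow_critical hd,
    integral_const_mul]
  linear_combination talentiConst E ^ 2 * (dim - 2) *
    integral_norm_sq_mul_one_add_norm_sq_rpow_neg (E := E) (s := dim) (by linarith)

theorem integral_norm_fderiv_talentiBubble_one_sq_pos (hd : 2 < dim) :
    0 < ∫ y : E, ‖fderiv ℝ (talentiBubble 1) y‖ ^ 2 := by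
  rw [integral_norm_fderiv_talentiBubble_one_sq hd]
  exact integral_pos_of_integrable_nonneg_nonzero (x := 0)
    (differentiable_talentiBubble_one.continuous.rpow_const fun y =>
      Or.inl (talentiBubble_one_pos hd y).ne')
    (integrable_talentiBubble_one_rpow_critical hd)
    (fun y => Real.rpow_nonneg (talentiBubble_one_pos hd y).le _)
    (Real.rpow_pos_of_pos (talentiBubble_one_pos hd 0) _).ne'

end TalentiBubble

section Cutoff

variable {φ V : E → ℝ} {ρ ε L c p : ℝ}

/-- A `C¹` cutoff function that equals `1` on the closed ball of radius `ρ` about the origin. -/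
structure IsCutoff (φ : E → ℝ) (ρ : ℝ) : Prop where
  radius_pos : 0 < ρ
  contDiff : ContDiff ℝ 1 φ
  hasCompactSupport : HasCompactSupport φ
  nonneg : ∀ x, 0 ≤ φ x
  le_one : ∀ x, φ x ≤ 1
  eq_one : ∀ x ∈ closedBall 0 ρ, φ x = 1

/-- The profile `V` truncated by `φ`, in the blow-up variable `y = x / ε`. -/
def cutoffProfile (φ : E → ℝ) (ε : ℝ) (V : E → ℝ) (y : E) : ℝ :=
  φ (ε • y) * V y

theorem mul_criticalDilation (hε : ε ≠ 0) (φ V : E → ℝ) (x : E) :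
    φ x * criticalDilation ε V x = criticalDilation ε (cutoffProfile φ ε V) x := by
  rw [criticalDilation, criticalDilation, cutoffProfile, smul_inv_smul₀ hε]
  ring

theorem cutoffProfile_eq_of_mem_closedBall (hφ : IsCutoff φ ρ) {y : E}
    (hy : ε • y ∈ closedBall 0 ρ) : cutoffProfile φ ε V y = V y := by
  rw [cutoffProfile, hφ.eq_one _ hy, one_mul]

theorem cutoffProfile_nonneg (hφ : IsCutoff φ ρ) (hV : ∀ y, 0 ≤ V y) (y : E) :
    0 ≤ cutoffProfile φ ε V y :=
  mul_nonneg (hφ.nonneg _) (hV y)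

theorem cutoffProfile_le (hφ : IsCutoff φ ρ) (hV : ∀ y, 0 ≤ V y) (y : E) :
    cutoffProfile φ ε V y ≤ V y :=
  mul_le_of_le_one_left (hV y) (hφ.le_one _)

theorem IsCutoff.exists_norm_fderiv_le (hφ : IsCutoff φ ρ) : ∃ L, ∀ x, ‖fderiv ℝ φ x‖ ≤ L :=
  (hφ.contDiff.continuous_fderiv one_ne_zero).bounded_above_of_compact_support
    (hφ.hasCompactSupport.fderiv ℝ)

theorem IsCutoff.norm_fderiv_le_mul_norm (hφ : IsCutoff φ ρ) (hL : ∀ x, ‖fderiv ℝ φ x‖ ≤ L)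
    (x : E) : ‖fderiv ℝ φ x‖ ≤ L / ρ * ‖x‖ := by
  have hρ := hφ.radius_pos
  have hL0 : 0 ≤ L := (norm_nonneg _).trans (hL 0)
  rcases lt_or_ge ‖x‖ ρ with hx | hx
  · have hconst : φ =ᶠ[𝓝 x] fun _ => 1 := by
      filter_upwards [isOpen_ball.mem_nhds (mem_ball_zero_iff.2 hx)] with z hz
      exact hφ.eq_one z (ball_subset_closedBall hz)
    rw [hconst.fderiv_eq, fderiv_fun_const, Pi.zero_apply, norm_zero]
    positivity
  · calc ‖fderiv ℝ φ x‖ ≤ L := hL x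
      _ = L / ρ * ρ := (div_mul_cancel₀ L hρ.ne').symm
      _ ≤ L / ρ * ‖x‖ := by gcongr

theorem norm_fderiv_cutoffProfile_le (hφ : IsCutoff φ ρ) (hε : 0 ≤ ε) {y : E}
    (hV : DifferentiableAt ℝ V y) (hV0 : 0 ≤ V y) :
    ‖fderiv ℝ (cutoffProfile φ ε V) y‖ ≤
      ‖fderiv ℝ V y‖ + V y * (ε * ‖fderiv ℝ φ (ε • y)‖) := by
  have hφd : DifferentiableAt ℝ (fun y => φ (ε • y)) y := by
    have := hφ.contDiff.differentiable one_ne_zero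
    fun_prop
  have product : fderiv ℝ (cutoffProfile φ ε V) y =
      φ (ε • y) • fderiv ℝ V y + V y • ε • fderiv ℝ φ (ε • y) := by
    rw [← fderiv_comp_smul]
    exact fderiv_fun_mul hφd hV
  calc ‖fderiv ℝ (cutoffProfile φ ε V) y‖
      ≤ ‖φ (ε • y) • fderiv ℝ V y‖ + ‖V y • ε • fderiv ℝ φ (ε • y)‖ := by
        rw [product]
        exact norm_add_le _ _
    _ = φ (ε • y) * ‖fderiv ℝ V y‖ + V y * (ε * ‖fderiv ℝ φ (ε • y)‖) := by
        rw [norm_smul, norm_smul, norm_smul, Real.norm_of_nonneg (hφ.nonneg _),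
          Real.norm_of_nonneg hV0, Real.norm_of_nonneg hε]
    _ ≤ ‖fderiv ℝ V y‖ + V y * (ε * ‖fderiv ℝ φ (ε • y)‖) := by
        gcongr
        exact mul_le_of_le_one_left (norm_nonneg _) (hφ.le_one _)

theorem norm_fderiv_cutoffProfile_sq_le (hφ : IsCutoff φ ρ) (hL : ∀ x, ‖fderiv ℝ φ x‖ ≤ L)
    (hε : 0 ≤ ε) {y : E} (hV : DifferentiableAt ℝ V y) (hV0 : 0 ≤ V y)
    (hVc : ‖fderiv ℝ V y‖ * ‖y‖ ≤ c * V y) :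
    ‖fderiv ℝ (cutoffProfile φ ε V) y‖ ^ 2 ≤
      ‖fderiv ℝ V y‖ ^ 2 + (2 * c * (L / ρ) + L ^ 2) * ε ^ 2 * V y ^ 2 := by
  have hρ := hφ.radius_pos
  have hL0 : 0 ≤ L := (norm_nonneg _).trans (hL 0)
  -- The cross term is of second order in `ε` because `∇φ` vanishes near the origin.
  have crossTerm : ‖fderiv ℝ V y‖ * ‖fderiv ℝ φ (ε • y)‖ ≤ L / ρ * ε * (c * V y) :=
    calc ‖fderiv ℝ V y‖ * ‖fderiv ℝ φ (ε • y)‖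
        ≤ ‖fderiv ℝ V y‖ * (L / ρ * ‖ε • y‖) := by
          gcongr
          exact hφ.norm_fderiv_le_mul_norm hL _
      _ = L / ρ * ε * (‖fderiv ℝ V y‖ * ‖y‖) := by
          rw [norm_smul, Real.norm_of_nonneg hε]
          ring
      _ ≤ L / ρ * ε * (c * V y) := by gcongr
  calc ‖fderiv ℝ (cutoffProfile φ ε V) y‖ ^ 2
      ≤ (‖fderiv ℝ V y‖ + V y * (ε * ‖fderiv ℝ φ (ε • y)‖)) ^ 2 := by
        gcongr
        exact norm_fderiv_cutoffProfile_le hφ hε hV hV0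
    _ = ‖fderiv ℝ V y‖ ^ 2 + 2 * V y * ε * (‖fderiv ℝ V y‖ * ‖fderiv ℝ φ (ε • y)‖) +
          V y ^ 2 * ε ^ 2 * ‖fderiv ℝ φ (ε • y)‖ ^ 2 := by ring
    _ ≤ ‖fderiv ℝ V y‖ ^ 2 + 2 * V y * ε * (L / ρ * ε * (c * V y)) +
          V y ^ 2 * ε ^ 2 * L ^ 2 := by
        gcongr
        exact hL _
    _ = ‖fderiv ℝ V y‖ ^ 2 + (2 * c * (L / ρ) + L ^ 2) * ε ^ 2 * V y ^ 2 := by ring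

theorem one_sub_mul_rpow_le_cutoffProfile_rpow (hφ : IsCutoff φ ρ) (hV : ∀ y, 0 ≤ V y) (y : E) :
    (1 - ε ^ 2 / ρ ^ 2 * ‖y‖ ^ 2) * V y ^ p ≤ cutoffProfile φ ε V y ^ p := by
  have hρ := hφ.radius_pos
  have hVp : 0 ≤ V y ^ p := Real.rpow_nonneg (hV y) p
  have hratio : ε ^ 2 / ρ ^ 2 * ‖y‖ ^ 2 = (‖ε • y‖ / ρ) ^ 2 := by
    rw [norm_smul, div_pow, mul_pow, Real.norm_eq_abs, sq_abs]
    ring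
  rw [hratio]
  rcases le_or_gt ‖ε • y‖ ρ with hy | hy
  · rw [cutoffProfile_eq_of_mem_closedBall hφ (mem_closedBall_zero_iff.2 hy)]
    exact mul_le_of_le_one_left hVp (sub_le_self 1 (sq_nonneg _))
  · have : 1 ≤ (‖ε • y‖ / ρ) ^ 2 := one_le_pow₀ ((one_le_div hρ).2 hy.le)
    exact (mul_nonpos_of_nonpos_of_nonneg (by linarith) hVp).trans
      (Real.rpow_nonneg (cutoffProfile_nonneg hφ hV y) p)

variable [MeasurableSpace E] [BorelSpace E] [FiniteDimensional ℝ E]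

theorem integrable_comp_cutoffProfile {g : ℝ → ℝ} (hφ : IsCutoff φ ρ) (hε : ε ≠ 0)
    (hV : Continuous V) (hg : Continuous g) (hg0 : g 0 = 0) :
    Integrable fun y => g (cutoffProfile φ ε V y) := by
  have hφc := hφ.contDiff.continuous
  refine (hg.comp (?_ : Continuous (cutoffProfile φ ε V))).integrable_of_hasCompactSupport ?_
  · unfold cutoffProfile
    fun_prop
  · exact HasCompactSupport.comp_left ((hφ.hasCompactSupport.comp_smul hε).mul_right) hg0

theorem integral_norm_fderiv_cutoffProfile_sq_le (hφ : IsCutoff φ ρ)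
    (hL : ∀ x, ‖fderiv ℝ φ x‖ ≤ L) (hε : 0 ≤ ε) (hV : Differentiable ℝ V) (hV0 : ∀ y, 0 ≤ V y)
    (hVc : ∀ y, ‖fderiv ℝ V y‖ * ‖y‖ ≤ c * V y)
    (hgrad : Integrable fun y => ‖fderiv ℝ V y‖ ^ 2) (hV2 : Integrable fun y => V y ^ 2) :
    ∫ y, ‖fderiv ℝ (cutoffProfile φ ε V) y‖ ^ 2 ≤
      (∫ y, ‖fderiv ℝ V y‖ ^ 2) + (2 * c * (L / ρ) + L ^ 2) * (∫ y, V y ^ 2) * ε ^ 2 := by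
  have hV2' := hV2.const_mul ((2 * c * (L / ρ) + L ^ 2) * ε ^ 2)
  calc ∫ y, ‖fderiv ℝ (cutoffProfile φ ε V) y‖ ^ 2
      ≤ ∫ y, (‖fderiv ℝ V y‖ ^ 2 + (2 * c * (L / ρ) + L ^ 2) * ε ^ 2 * V y ^ 2) :=
        integral_mono_of_nonneg (.of_forall fun y => sq_nonneg _) (hgrad.add hV2') <|
          .of_forall fun y => norm_fderiv_cutoffProfile_sq_le hφ hL hε (hV y) (hV0 y) (hVc y)
    _ = _ := by
        rw [integral_add hgrad hV2', integral_const_mul]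
        ring

theorem integral_cutoffProfile_rpow_le (hφ : IsCutoff φ ρ) (hV : ∀ y, 0 ≤ V y) (hp : 0 ≤ p)
    (hVp : Integrable fun y => V y ^ p) :
    ∫ y, cutoffProfile φ ε V y ^ p ≤ ∫ y, V y ^ p :=
  integral_mono_of_nonneg
    (.of_forall fun y => Real.rpow_nonneg (cutoffProfile_nonneg hφ hV y) p) hVp
    (.of_forall fun y =>
      Real.rpow_le_rpow (cutoffProfile_nonneg hφ hV y) (cutoffProfile_le hφ hV y) hp)

theorem integral_cutoffProfile_sq_le (hφ : IsCutoff φ ρ) (hV : ∀ y, 0 ≤ V y)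
    (hV2 : Integrable fun y => V y ^ 2) :
    ∫ y, cutoffProfile φ ε V y ^ 2 ≤ ∫ y, V y ^ 2 := by
  simp only [← Real.rpow_two] at hV2 ⊢
  exact integral_cutoffProfile_rpow_le hφ hV zero_le_two hV2

theorem sub_le_integral_cutoffProfile_rpow (hφ : IsCutoff φ ρ) (hε : ε ≠ 0) (hVc : Continuous V)
    (hV : ∀ y, 0 ≤ V y) (hp : 0 < p) (hVp : Integrable fun y => V y ^ p)
    (hVp2 : Integrable fun y => ‖y‖ ^ 2 * V y ^ p) :
    (∫ y, V y ^ p) - (∫ y, ‖y‖ ^ 2 * V y ^ p) / ρ ^ 2 * ε ^ 2 ≤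
      ∫ y, cutoffProfile φ ε V y ^ p := by
  have hwp : Integrable fun y => cutoffProfile φ ε V y ^ p :=
    integrable_comp_cutoffProfile hφ hε hVc (Real.continuous_rpow_const hp.le)
      (Real.zero_rpow hp.ne')
  have hVp2' := hVp2.const_mul (ε ^ 2 / ρ ^ 2)
  calc (∫ y, V y ^ p) - (∫ y, ‖y‖ ^ 2 * V y ^ p) / ρ ^ 2 * ε ^ 2
      = ∫ y, (V y ^ p - ε ^ 2 / ρ ^ 2 * (‖y‖ ^ 2 * V y ^ p)) := by
        rw [integral_sub hVp hVp2', integral_const_mul]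
        ring
    _ ≤ ∫ y, cutoffProfile φ ε V y ^ p := by
        refine integral_mono (hVp.sub hVp2') hwp fun y => ?_
        exact (by ring : _ = (1 - ε ^ 2 / ρ ^ 2 * ‖y‖ ^ 2) * V y ^ p).trans_le
          (one_sub_mul_rpow_le_cutoffProfile_rpow hφ hV y)

theorem setIntegral_closedBall_sq_pos (hV : ∀ y, 0 < V y) (hV2 : Integrable fun y => V y ^ 2) :
    0 < ∫ y in closedBall 0 1, V y ^ 2 := by
  have hsupp : (Function.support fun y => V y ^ 2) = Set.univ :=
    Set.eq_univ_of_forall fun y => (pow_pos (hV y) 2).ne'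
  rw [setIntegral_pos_iff_support_of_nonneg_ae (.of_forall fun y => sq_nonneg _)
    hV2.integrableOn, hsupp, Set.univ_inter]
  exact measure_closedBall_pos _ _ one_pos

theorem setIntegral_closedBall_sq_le_integral_cutoffProfile_sq (hφ : IsCutoff φ ρ) (hε : 0 < ε)
    (hερ : ε ≤ ρ) (hV : Continuous V) :
    ∫ y in closedBall 0 1, V y ^ 2 ≤ ∫ y, cutoffProfile φ ε V y ^ 2 := by
  have hball : ∀ y ∈ closedBall (0 : E) 1, ε • y ∈ closedBall 0 ρ := fun y hy => by
    rw [mem_closedBall_zero_iff] at hy ⊢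
    calc ‖ε • y‖ = ε * ‖y‖ := by rw [norm_smul, Real.norm_of_nonneg hε.le]
      _ ≤ ρ * 1 := by gcongr; exact hφ.radius_pos.le
      _ = ρ := mul_one ρ
  calc ∫ y in closedBall 0 1, V y ^ 2 = ∫ y in closedBall 0 1, cutoffProfile φ ε V y ^ 2 :=
        setIntegral_congr_fun measurableSet_closedBall fun y hy => by
          simp only [cutoffProfile_eq_of_mem_closedBall hφ (hball y hy)]
    _ ≤ ∫ y, cutoffProfile φ ε V y ^ 2 :=
        setIntegral_le_integral
          (integrable_comp_cutoffProfile hφ hε.ne' hV (continuous_pow 2) (zero_pow two_ne_zero))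
          (.of_forall fun y => sq_nonneg _)

theorem integrable_negMulLog_cutoffProfile_sq (hφ : IsCutoff φ ρ) (hε : ε ≠ 0)
    (hV : Continuous V) : Integrable fun y => Real.negMulLog (cutoffProfile φ ε V y ^ 2) :=
  integrable_comp_cutoffProfile (g := fun x => Real.negMulLog (x ^ 2)) hφ hε hV
    (by fun_prop) (by simp)

theorem integral_negMulLog_cutoffProfile_sq_le {δ : ℝ} (hφ : IsCutoff φ ρ) (hε : ε ≠ 0)
    (hVc : Continuous V) (hV : ∀ y, 0 ≤ V y) (hδ : 0 < δ) (hδ1 : δ ≤ 1)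
    (hVδ : Integrable fun y => V y ^ (2 * (1 - δ))) :
    ∫ y, Real.negMulLog (cutoffProfile φ ε V y ^ 2) ≤ (∫ y, V y ^ (2 * (1 - δ))) / δ := by
  rw [← integral_div]
  refine integral_mono (integrable_negMulLog_cutoffProfile_sq hφ hε hVc) (hVδ.div_const δ)
    fun y => ?_
  have hw := cutoffProfile_nonneg (ε := ε) hφ hV y
  calc Real.negMulLog (cutoffProfile φ ε V y ^ 2)
      ≤ (cutoffProfile φ ε V y ^ 2) ^ (1 - δ) / δ := negMulLog_le_rpow_div (sq_nonneg _) hδ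
    _ = cutoffProfile φ ε V y ^ (2 * (1 - δ)) / δ := by
        rw [← Real.rpow_natCast_mul hw, Nat.cast_ofNat]
    _ ≤ V y ^ (2 * (1 - δ)) / δ := by
        gcongr
        exact cutoffProfile_le hφ hV y

end Cutoff

section EnergyOfBubble

variable [MeasurableSpace E] [BorelSpace E] [FiniteDimensional ℝ E] {φ : E → ℝ} {ρ : ℝ} {Ω : Set E}

theorem logEnergy_mul_talentiBubble {ε t : ℝ} (hd : 2 < dim) (hφ : IsCutoff φ ρ)
    (hφΩ : tsupport φ ⊆ Ω) (hε : 0 < ε) (ht : 0 ≤ t) (lam μ : ℝ) :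
    logEnergy lam μ Ω (fun x => t * (φ x * talentiBubble ε x)) =
      fiberEnergy dim lam μ (t ^ 2) (∫ y, ‖fderiv ℝ (cutoffProfile φ ε (talentiBubble 1)) y‖ ^ 2)
        (∫ y, cutoffProfile φ ε (talentiBubble 1) y ^ (2 * dim / (dim - 2)))
        (ε ^ 2 * ∫ y, cutoffProfile φ ε (talentiBubble 1) y ^ 2)
        (ε ^ 2 * ((dim - 2) * Real.log ε * (∫ y, cutoffProfile φ ε (talentiBubble 1) y ^ 2) +
          ∫ y, Real.negMulLog (cutoffProfile φ ε (talentiBubble 1) y ^ 2))) := by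
  have hV : Continuous (talentiBubble (E := E) 1) := differentiable_talentiBubble_one.continuous
  have hsupp : tsupport (fun x => t * (φ x * talentiBubble ε x)) ⊆ Ω :=
    (tsupport_mul_subset_right.trans tsupport_mul_subset_left).trans hφΩ
  rw [logEnergy_eq_univ_of_tsupport_subset hd hsupp, talentiBubble_eq_criticalDilation hε]
  simp only [mul_criticalDilation hε.ne']
  exact logEnergy_univ_mul_criticalDilation hd.ne' hε ht
    (cutoffProfile_nonneg hφ fun y => (talentiBubble_one_pos hd y).le)
    (integrable_comp_cutoffProfile hφ hε.ne' hV (continuous_pow 2) (zero_pow two_ne_zero))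
    (integrable_negMulLog_cutoffProfile_sq hφ hε.ne' hV) lam μ

theorem stmt_17_general (hE : 5 ≤ Module.finrank ℝ E) (lam : ℝ) {μ : ℝ} (hμ : 0 < μ)
    (hφ : IsCutoff φ ρ) (hφΩ : tsupport φ ⊆ Ω) :
    ∀ᶠ ε in 𝓝[>] (0 : ℝ), ∀ t, 0 ≤ t →
      logEnergy lam μ Ω (fun x => t * (φ x * talentiBubble ε x)) <
        (∫ x : E, ‖fderiv ℝ (talentiBubble 1) x‖ ^ 2) / dim := by
  have hd5 : (5 : ℝ) ≤ dim := by exact_mod_cast hE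
  have hd : 2 < dim := by linarith
  have hp : 0 < 2 * dim / (dim - 2) := div_pos (by linarith) (sub_pos.2 hd)
  obtain ⟨L, hL⟩ := hφ.exists_norm_fderiv_le
  have hVd := differentiable_talentiBubble_one (E := E)
  have hV := talentiBubble_one_pos (E := E) hd
  have hV0 := fun y => (hV y).le
  have hV2 := integrable_talentiBubble_one_sq (E := E) (by linarith)
  have hVcrit := integrable_talentiBubble_one_rpow_critical (E := E) hd
  have hK := integral_norm_fderiv_talentiBubble_one_sq (E := E) hd
  filter_upwards [eventually_fiberEnergy_lt hd hμ
    (integral_norm_fderiv_talentiBubble_one_sq_pos hd) (setIntegral_closedBall_sq_pos hV hV2),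
    Ioc_mem_nhdsGT hφ.radius_pos] with ε energy_lt ⟨hε, hερ⟩ t ht
  have gradient_le := integral_norm_fderiv_cutoffProfile_sq_le hφ hL hε.le hVd hV0
    (norm_fderiv_talentiBubble_one_mul_norm_le hd)
    (integrable_norm_fderiv_talentiBubble_one_sq hd) hV2
  have critical_le := integral_cutoffProfile_rpow_le (ε := ε) hφ hV0 hp.le hVcrit
  have le_critical := sub_le_integral_cutoffProfile_rpow hφ hε.ne' hVd.continuous hV0 hp hVcrit
    (integrable_norm_sq_mul_talentiBubble_one_rpow_critical hd)
  have critical_nonneg : 0 ≤ ∫ y, cutoffProfile φ ε (talentiBubble 1) y ^ (2 * dim / (dim - 2)) :=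
    integral_nonneg fun y => Real.rpow_nonneg (cutoffProfile_nonneg hφ hV0 y) _
  have le_mass := setIntegral_closedBall_sq_le_integral_cutoffProfile_sq hφ hε hερ hVd.continuous
  have mass_le := integral_cutoffProfile_sq_le (ε := ε) hφ hV0 hV2
  -- `δ = 1 / 8` asks for the bubble to be in `L ^ (7 / 4)`, which holds from dimension `5` on.
  have entropy_le := integral_negMulLog_cutoffProfile_sq_le (δ := 1 / 8) hφ hε.ne' hVd.continuous
    hV0 (by norm_num) (by norm_num) (integrable_talentiBubble_one_rpow hd (by linarith))
  rw [logEnergy_mul_talentiBubble hd hφ hφΩ hε ht]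
  rw [← hK] at critical_le le_critical
  exact energy_lt _ _ _ _ _ (sq_nonneg t) gradient_le critical_nonneg critical_le le_critical
    le_mass mass_le entropy_le

end EnergyOfBubble

end InnerProductSpace

/-- Lemma 3.3: for `N ≥ 5`, `λ ∈ ℝ`, `μ > 0`, there is `ε₀ > 0` such that
`I(t U_ε) < K_N/N = (1/N) S^{N/2}` for all `ε ∈ (0, ε₀)` and `t ≥ 0`, where
`U_ε = φ u_ε` and `I` is the energy functional of the problem
`-Δu = |u|^{2*-2}u + λu + μ u log u²` (with `2* = 2N/(N-2)`, `1/2* = (N-2)/(2N)`). -/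
theorem stmt_17 (N : ℕ) (hN : 5 ≤ N) (lam μ : ℝ) (hμ : 0 < μ)
    (u : ℝ → EuclideanSpace ℝ (Fin N) → ℝ)
    (hu : ∀ ε : ℝ, 0 < ε → ∀ x : EuclideanSpace ℝ (Fin N),
      u ε x = ((N : ℝ) * ((N : ℝ) - 2)) ^ (((N : ℝ) - 2) / 4) *
        (ε / (ε ^ 2 + ‖x‖ ^ 2)) ^ (((N : ℝ) - 2) / 2))
    (Ω : Set (EuclideanSpace ℝ (Fin N))) (hΩo : IsOpen Ω)
    (hΩb : Bornology.IsBounded Ω) (h0Ω : (0 : EuclideanSpace ℝ (Fin N)) ∈ Ω)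
    (φ : EuclideanSpace ℝ (Fin N) → ℝ) (hφs : ContDiff ℝ (⊤ : ℕ∞) φ)
    (hφc : HasCompactSupport φ) (hφΩ : tsupport φ ⊆ Ω)
    (hφ01 : ∀ x, 0 ≤ φ x ∧ φ x ≤ 1)
    (ρ : ℝ) (hρ : 0 < ρ) (hball : Metric.closedBall 0 ρ ⊆ Ω)
    (hφ1 : ∀ x ∈ Metric.closedBall (0 : EuclideanSpace ℝ (Fin N)) ρ, φ x = 1)
    (I : (EuclideanSpace ℝ (Fin N) → ℝ) → ℝ)
    (hI : ∀ v : EuclideanSpace ℝ (Fin N) → ℝ,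
      I v = (1 / 2) * (∫ x in Ω, ‖fderiv ℝ v x‖ ^ 2) -
        (((N : ℝ) - 2) / (2 * (N : ℝ))) *
          (∫ x in Ω, (max (v x) 0) ^ (2 * (N : ℝ) / ((N : ℝ) - 2))) -
        (lam / 2) * (∫ x in Ω, (max (v x) 0) ^ 2) -
        (μ / 2) * (∫ x in Ω, (max (v x) 0) ^ 2 * (Real.log ((max (v x) 0) ^ 2) - 1))) :
    ∃ ε₀ : ℝ, 0 < ε₀ ∧ ∀ ε ∈ Set.Ioo (0 : ℝ) ε₀, ∀ t : ℝ, 0 ≤ t →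
      I (fun x => t * (φ x * u ε x)) <
        (∫ x : EuclideanSpace ℝ (Fin N), ‖fderiv ℝ (u 1) x‖ ^ 2) / (N : ℝ) := by
  have hφ : IsCutoff φ ρ := ⟨hρ, hφs.of_le (by exact_mod_cast le_top), hφc, fun x => (hφ01 x).1,
    fun x => (hφ01 x).2, hφ1⟩
  have hbubble : ∀ ε, 0 < ε → u ε = talentiBubble ε := fun ε hε => funext fun x => by
    rw [hu ε hε, talentiBubble, talentiConst, finrank_euclideanSpace_fin]
  have hEnergy : ∀ v, I v = logEnergy lam μ Ω v := fun v => by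
    rw [hI, logEnergy, finrank_euclideanSpace_fin]
  have eventually_lt := stmt_17_general (by rwa [finrank_euclideanSpace_fin]) lam hμ hφ hφΩ
  obtain ⟨ε₀, hε₀, h⟩ := mem_nhdsGT_iff_exists_Ioo_subset.1 eventually_lt
  refine ⟨ε₀, hε₀, fun ε hε t ht => ?_⟩
  rw [hEnergy, hbubble ε hε.1, hbubble 1 one_pos]
  simpa only [finrank_euclideanSpace_fin] using h hε t ht
end
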